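/- Let n ≥ 4 be even and let u be a normal solution with Q e^{nu} ∈ L¹(ℝⁿ). If 0 ≤ R_g ≤ C near infinity for some C > 0 and e^{nu} ∈ L¹(ℝⁿ), then ∫_{ℝⁿ} Q e^{nu} dx = (n−1)!|𝕊ⁿ|. -/

import Mathlib

open MeasureTheory Filter

noncomputable section

/-- Euclidean space ℝⁿ. -/
abbrev E (n : ℕ) := EuclideanSpace ℝ (Fin n)

/-- Volume of the standard unit n-sphere `|𝕊ⁿ|`. -/
noncomputable def sphereVol (n : ℕ) : ℝ :=
  (μH[(n : ℝ)] (Metric.sphere (0 : E (n + 1)) 1)).toReal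

/-- The Euclidean Laplacian of `u` at `x`. -/
noncomputable def lap {n : ℕ} (u : E n → ℝ) (x : E n) : ℝ :=
  ∑ i : Fin n, fderiv ℝ (fun y => fderiv ℝ u y (EuclideanSpace.single i 1)) x
    (EuclideanSpace.single i 1)

/-- `u` is a normal solution with Q-curvature `Q`. -/
def IsNormal (n : ℕ) (u Q : E n → ℝ) : Prop :=
  ∃ C : ℝ, ∀ x, u x =
    (2 / (Nat.factorial (n - 1) * sphereVol n)) *
      ∫ y, Real.log (‖y‖ / ‖x - y‖) * (Q y * Real.exp (n * u y)) + C

/-- The constant `α₀`. -/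
noncomputable def alpha0 (n : ℕ) (u Q : E n → ℝ) : ℝ :=
  (2 / (Nat.factorial (n - 1) * sphereVol n)) * ∫ y, Q y * Real.exp (n * u y)

/-- Scalar curvature of the conformal metric `e^{2u}|dx|²`. -/
noncomputable def Rg (n : ℕ) (u : E n → ℝ) (x : E n) : ℝ :=
  2 * (n - 1) * Real.exp (-2 * u x) *
    (-(lap u x) - (n - 2) / 2 * ‖gradient u x‖ ^ 2)
/-- The gradient `z / ‖z‖²` of `z ↦ log ‖z‖`. -/
def logGrad {n : ℕ} (z : E n) : E n := (‖z‖ ^ 2)⁻¹ • z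

lemma norm_logGrad_sq {n : ℕ} (z : E n) : ‖logGrad z‖ ^ 2 = (‖z‖ ^ 2)⁻¹ := by
  rcases eq_or_ne z 0 with rfl | hz
  · simp [logGrad]
  · have : ‖z‖ ≠ 0 := norm_ne_zero_iff.2 hz
    rw [logGrad, norm_smul, Real.norm_of_nonneg (by positivity)]
    field_simp

lemma norm_logGrad_le {n : ℕ} (z : E n) : ‖logGrad z‖ ≤ 1 + (‖z‖ ^ 2)⁻¹ := by
  rw [← norm_logGrad_sq]
  nlinarith [sq_nonneg (‖logGrad z‖ - 1), norm_nonneg (logGrad z)]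

lemma logGrad_smul {n : ℕ} {r : ℝ} (hr : r ≠ 0) (z : E n) :
    r • logGrad (r • z) = logGrad z := by
  rw [logGrad, logGrad, norm_smul, smul_smul, smul_smul, mul_pow, Real.norm_eq_abs, sq_abs]
  congr 1
  field_simp

@[fun_prop]
lemma measurable_logGrad {n : ℕ} : Measurable (logGrad (n := n)) := by
  unfold logGrad
  fun_prop

lemma continuousAt_logGrad {n : ℕ} {z : E n} (hz : z ≠ 0) : ContinuousAt logGrad z := by
  have : ‖z‖ ^ 2 ≠ 0 := by simpa using hz
  unfold logGrad
  fun_prop (disch := assumption)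

lemma locallyIntegrable_inv_norm_sq {n : ℕ} (hn : 3 ≤ n) :
    LocallyIntegrable (fun z : E n => (‖z‖ ^ 2)⁻¹) := by
  have : Nonempty (Fin n) := ⟨⟨0, by omega⟩⟩
  have key (r : ℝ) : IntegrableOn (fun z : E n => (‖z‖ ^ 2)⁻¹) (Metric.ball 0 r) := by
    rw [integrableOn_fun_norm_addHaar (μ := volume) (E := E n) (f := fun t : ℝ => (t ^ 2)⁻¹)]
    have h : IntegrableOn (fun y : ℝ => y ^ (n - 3)) (Set.Ioo 0 r) :=
      (Continuous.integrableOn_Icc (by fun_prop)).mono_set Set.Ioo_subset_Icc_self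
    refine h.congr_fun (fun y hy => ?_) measurableSet_Ioo
    have hy0 : y ≠ 0 := hy.1.ne'
    obtain ⟨m, rfl⟩ := Nat.exists_eq_add_of_le hn
    simp only [finrank_euclideanSpace, Fintype.card_fin, smul_eq_mul]
    rw [show 3 + m - 1 = m + 2 by omega, show 3 + m - 3 = m by omega]
    field_simp
    ring
  intro x
  exact ⟨Metric.ball 0 (‖x‖ + 1), Metric.isOpen_ball.mem_nhds (by simp), key _⟩

lemma integrable_mul_inv_norm_sub_sq {n : ℕ} (hn : 3 ≤ n) {g : E n → ℝ} (hg : Continuous g)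
    (hgc : HasCompactSupport g) (y : E n) : Integrable (fun x => g x * (‖x - y‖ ^ 2)⁻¹) := by
  have h := (locallyIntegrable_inv_norm_sq hn).integrable_smul_left_of_hasCompactSupport
    (g := fun x => g (x + y)) (by fun_prop) (hgc.comp_homeomorph (Homeomorph.addRight y))
  simpa using h.comp_sub_right y

lemma integral_mul_fderiv_of_hasCompactSupport {n : ℕ} {g h : E n → ℝ} (hg : ContDiff ℝ 1 g)
    (hgc : HasCompactSupport g) (hh : ContDiff ℝ 1 h) (v : E n) :
    ∫ x, g x * fderiv ℝ h x v = -∫ x, fderiv ℝ g x v * h x := by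
  have c1 : Continuous fun x => fderiv ℝ g x v :=
    (hg.continuous_fderiv one_ne_zero).clm_apply continuous_const
  have c2 : Continuous fun x => fderiv ℝ h x v :=
    (hh.continuous_fderiv one_ne_zero).clm_apply continuous_const
  apply integral_mul_fderiv_eq_neg_fderiv_mul_of_integrable
  · exact (c1.mul hh.continuous).integrable_of_hasCompactSupport (hgc.fderiv_apply ℝ v).mul_right
  · exact (hg.continuous.mul c2).integrable_of_hasCompactSupport hgc.mul_right
  · exact (hg.continuous.mul hh.continuous).integrable_of_hasCompactSupport hgc.mul_right
  · exact fun x _ => hg.differentiable one_ne_zero x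
  · exact fun x _ => hh.differentiable one_ne_zero x

lemma abs_half_log_sq_add_le {t ε : ℝ} (ht : t ≠ 0) (h0 : 0 ≤ ε) (h1 : ε ≤ 1) :
    |1 / 2 * Real.log (t ^ 2 + ε)| ≤ t ^ 2 + (t ^ 2)⁻¹ := by
  have h2 : 0 < t ^ 2 := by positivity
  have u1 := Real.log_le_sub_one_of_pos (show 0 < t ^ 2 + ε by positivity)
  have u2 := Real.log_le_sub_one_of_pos (inv_pos.2 h2)
  have u3 := Real.log_le_log h2 (show t ^ 2 ≤ t ^ 2 + ε by linarith)
  rw [Real.log_inv] at u2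
  have := inv_pos.2 h2
  rw [abs_le]
  constructor <;> linarith

lemma integral_fderiv_mul_log_norm_sub {n : ℕ} (hn : 3 ≤ n) {g : E n → ℝ} (hg : ContDiff ℝ 1 g)
    (hgc : HasCompactSupport g) (y v : E n) :
    ∫ x, fderiv ℝ g x v * Real.log ‖x - y‖ = -∫ x, g x * inner ℝ (logGrad (x - y)) v := by
  have : Nonempty (Fin n) := ⟨⟨0, by omega⟩⟩
  have hne : ∀ᵐ x : E n, x - y ≠ 0 := by
    filter_upwards [compl_mem_ae_iff.2 (measure_singleton (μ := (volume : Measure (E n))) y)] with x hx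
    simpa [sub_eq_zero] using hx
  let ε : ℕ → ℝ := fun k => 1 / ((k : ℝ) + 1)
  have e0 (k) : 0 < ε k := by positivity
  have e1 (k) : ε k ≤ 1 := by
    simp only [ε]; rw [div_le_one (by positivity)]; linarith [k.cast_nonneg (α := ℝ)]
  have et : Tendsto ε atTop (nhds 0) := tendsto_one_div_add_atTop_nhds_zero_nat
  let h : ℕ → E n → ℝ := fun k x => 1 / 2 * Real.log (‖x - y‖ ^ 2 + ε k)
  have pos (k) (x : E n) : 0 < ‖x - y‖ ^ 2 + ε k := by have := e0 k; positivity
  have hsm (k) : ContDiff ℝ 1 (h k) := by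
    refine contDiff_const.mul (ContDiff.log ?_ fun x => (pos k x).ne')
    exact ((contDiff_id.sub contDiff_const).norm_sq ℝ).add contDiff_const
  have hd (k) (x : E n) :
      fderiv ℝ (h k) x v = (‖x - y‖ ^ 2 + ε k)⁻¹ * inner ℝ (x - y) v := by
    have : HasFDerivAt (h k) _ x := ((((hasFDerivAt_id x).sub_const y).norm_sq.add_const (ε k)).log (pos k x).ne').const_mul
      (1 / 2 : ℝ)
    rw [this.fderiv, inner_sub_left]
    simp
    ring
  have c1 : Continuous fun x => fderiv ℝ g x v :=
    (hg.continuous_fderiv one_ne_zero).clm_apply continuous_const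
  have s1 : HasCompactSupport fun x => fderiv ℝ g x v := hgc.fderiv_apply ℝ v
  have ibp (k) := integral_mul_fderiv_of_hasCompactSupport hg hgc (hsm k) v
  have T1 : Tendsto (fun k => ∫ x, fderiv ℝ g x v * h k x) atTop
      (nhds (∫ x, fderiv ℝ g x v * Real.log ‖x - y‖)) := by
    refine tendsto_integral_of_dominated_convergence
      (fun x => |fderiv ℝ g x v| * ‖x - y‖ ^ 2 + |fderiv ℝ g x v| * (‖x - y‖ ^ 2)⁻¹)
      (fun k => (c1.mul (hsm k).continuous).aestronglyMeasurable) ?_ (fun k => ?_) ?_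
    · refine Integrable.add ?_ (integrable_mul_inv_norm_sub_sq hn c1.abs s1.norm y)
      exact Continuous.integrable_of_hasCompactSupport (by fun_prop) s1.norm.mul_right
    · filter_upwards [hne] with x hx
      rw [norm_mul, Real.norm_eq_abs, Real.norm_eq_abs, ← mul_add]
      gcongr
      exact abs_half_log_sq_add_le (by simpa using hx) (e0 k).le (e1 k)
    · filter_upwards [hne] with x hx
      refine Tendsto.const_mul _ ?_
      have : Real.log ‖x - y‖ = 1 / 2 * Real.log (‖x - y‖ ^ 2 + 0) := by
        rw [add_zero, Real.log_pow]; push_cast; ring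
      rw [this]
      refine Tendsto.const_mul _ (Tendsto.log (et.const_add _) ?_)
      simpa using hx
  have T2 : Tendsto (fun k => ∫ x, g x * fderiv ℝ (h k) x v) atTop
      (nhds (∫ x, g x * inner ℝ (logGrad (x - y)) v)) := by
    refine tendsto_integral_of_dominated_convergence
      (fun x => (|g x| + |g x| * (‖x - y‖ ^ 2)⁻¹) * ‖v‖)
      (fun k => (hg.continuous.mul (((hsm k).continuous_fderiv one_ne_zero).clm_apply
        continuous_const)).aestronglyMeasurable) ?_ (fun k => ?_) ?_
    · refine Integrable.mul_const (Integrable.add ?_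
        (integrable_mul_inv_norm_sub_sq hn hg.continuous.abs hgc.norm y)) _
      exact Continuous.integrable_of_hasCompactSupport (by fun_prop) hgc.norm
    · filter_upwards [hne] with x hx
      have hx0 : 0 < ‖x - y‖ := by simpa using hx
      rw [hd, norm_mul, norm_mul, Real.norm_eq_abs, Real.norm_of_nonneg (inv_pos.2 (pos k x)).le]
      have a1 : ‖inner ℝ (x - y) v‖ ≤ ‖x - y‖ * ‖v‖ := norm_inner_le_norm _ _
      have a2 : (‖x - y‖ ^ 2 + ε k)⁻¹ ≤ (‖x - y‖ ^ 2)⁻¹ := by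
        gcongr; linarith [e0 k]
      have a3 : (‖x - y‖ ^ 2)⁻¹ * ‖x - y‖ ≤ 1 + (‖x - y‖ ^ 2)⁻¹ := by
        have := norm_logGrad_le (x - y)
        rwa [logGrad, norm_smul, Real.norm_of_nonneg (by positivity)] at this
      calc |g x| * ((‖x - y‖ ^ 2 + ε k)⁻¹ * ‖inner ℝ (x - y) v‖)
          ≤ |g x| * ((‖x - y‖ ^ 2)⁻¹ * (‖x - y‖ * ‖v‖)) := by gcongr
        _ = |g x| * ((‖x - y‖ ^ 2)⁻¹ * ‖x - y‖) * ‖v‖ := by ring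
        _ ≤ |g x| * (1 + (‖x - y‖ ^ 2)⁻¹) * ‖v‖ := by gcongr
        _ = _ := by ring
    · filter_upwards [hne] with x hx
      refine Tendsto.const_mul _ ?_
      simp only [hd, logGrad, real_inner_smul_left]
      refine Tendsto.mul_const _ (Tendsto.inv₀ ?_ (by simpa using hx))
      simpa using et.const_add (‖x - y‖ ^ 2)
  simp only [ibp] at T2
  have := tendsto_nhds_unique T2 T1.neg
  rw [this, neg_neg]

lemma lintegral_inv_norm_sub_sq_le {n : ℕ} (S : Set (E n)) (y : E n) :
    ∫⁻ x in S, ENNReal.ofReal ((‖x - y‖ ^ 2)⁻¹) ≤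
      volume S + ∫⁻ z in Metric.ball (0 : E n) 1, ENNReal.ofReal ((‖z‖ ^ 2)⁻¹) := by
  let ψ : E n → ENNReal := (Metric.ball (0 : E n) 1).indicator fun z => ENNReal.ofReal ((‖z‖ ^ 2)⁻¹)
  have hψ : Measurable ψ := by
    refine Measurable.indicator ?_ measurableSet_ball
    fun_prop
  have le (z : E n) : ENNReal.ofReal ((‖z‖ ^ 2)⁻¹) ≤ 1 + ψ z := by
    by_cases hz : z ∈ Metric.ball (0 : E n) 1
    · simp only [ψ, Set.indicator_of_mem hz]
      exact le_add_self
    · simp only [ψ, Set.indicator_of_notMem hz, add_zero]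
      have : 1 ≤ ‖z‖ := by simpa using hz
      exact ENNReal.ofReal_le_one.2 (inv_le_one_of_one_le₀ (one_le_pow₀ this))
  calc ∫⁻ x in S, ENNReal.ofReal ((‖x - y‖ ^ 2)⁻¹)
      ≤ ∫⁻ x in S, (1 + ψ (x - y)) := lintegral_mono fun x => le _
    _ = volume S + ∫⁻ x in S, ψ (x - y) := by
        rw [lintegral_add_left measurable_const]; simp
    _ ≤ volume S + ∫⁻ x, ψ (x - y) := by
        gcongr 1; exact setLIntegral_le_lintegral _ _
    _ = volume S + ∫⁻ z in Metric.ball (0 : E n) 1, ENNReal.ofReal ((‖z‖ ^ 2)⁻¹) := by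
        rw [lintegral_sub_right_eq_self ψ y, lintegral_indicator measurableSet_ball]

lemma lintegral_ball_inv_norm_sq_lt_top {n : ℕ} (hn : 3 ≤ n) :
    ∫⁻ z in Metric.ball (0 : E n) 1, ENNReal.ofReal ((‖z‖ ^ 2)⁻¹) < ⊤ := by
  have h : IntegrableOn (fun z : E n => (‖z‖ ^ 2)⁻¹) (Metric.ball 0 1) :=
    ((locallyIntegrable_inv_norm_sq hn).integrableOn_isCompact
      (isCompact_closedBall 0 1)).mono_set Metric.ball_subset_closedBall
  have := h.2
  rwa [hasFiniteIntegral_iff_ofReal (.of_forall fun z => by positivity)] at this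

lemma integrable_prod_inv_norm_sub_sq {n : ℕ} (hn : 3 ≤ n) {f : E n → ℝ} (hf : Integrable f)
    (R : ℝ) : Integrable (fun p : E n × E n => (‖p.1 - p.2‖ ^ 2)⁻¹ * f p.2)
      ((volume.restrict (Metric.closedBall 0 R)).prod volume) := by
  have hm : Measurable fun p : E n × E n => (‖p.1 - p.2‖ ^ 2)⁻¹ := by fun_prop
  refine ⟨hm.aestronglyMeasurable.mul hf.1.comp_snd, ?_⟩
  have hvol : volume (Metric.closedBall (0 : E n) R) < ⊤ := measure_closedBall_lt_top
  set M := volume (Metric.closedBall (0 : E n) R) +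
    ∫⁻ z in Metric.ball (0 : E n) 1, ENNReal.ofReal ((‖z‖ ^ 2)⁻¹) with hM
  have hMt : M < ⊤ := ENNReal.add_lt_top.2 ⟨hvol, lintegral_ball_inv_norm_sq_lt_top hn⟩
  have e (p : E n × E n) : ‖(‖p.1 - p.2‖ ^ 2)⁻¹ * f p.2‖ₑ =
      ENNReal.ofReal ((‖p.1 - p.2‖ ^ 2)⁻¹) * ‖f p.2‖ₑ := by
    rw [enorm_mul, Real.enorm_of_nonneg (by positivity)]
  simp only [HasFiniteIntegral, e]
  have hme : AEMeasurable (fun p : E n × E n => ENNReal.ofReal ((‖p.1 - p.2‖ ^ 2)⁻¹) * ‖f p.2‖ₑ)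
      ((volume.restrict (Metric.closedBall 0 R)).prod volume) :=
    hm.ennreal_ofReal.aemeasurable.mul hf.1.comp_snd.enorm
  rw [lintegral_prod_symm _ hme]
  calc ∫⁻ y, ∫⁻ x in Metric.closedBall 0 R, ENNReal.ofReal ((‖x - y‖ ^ 2)⁻¹) * ‖f y‖ₑ
      = ∫⁻ y, (∫⁻ x in Metric.closedBall 0 R, ENNReal.ofReal ((‖x - y‖ ^ 2)⁻¹)) * ‖f y‖ₑ := by
        congr with y
        rw [lintegral_mul_const]
        fun_prop
    _ ≤ ∫⁻ y, M * ‖f y‖ₑ := by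
        gcongr with y
        exact lintegral_inv_norm_sub_sq_le _ y
    _ = M * ∫⁻ y, ‖f y‖ₑ := lintegral_const_mul'' _ hf.1.enorm
    _ < ⊤ := ENNReal.mul_lt_top hMt hf.2

lemma abs_log_le_add_inv {t : ℝ} (ht : 0 ≤ t) : |Real.log t| ≤ t + t⁻¹ := by
  rcases ht.eq_or_lt with rfl | h
  · simp
  have h1 := Real.log_le_sub_one_of_pos h
  have h2 := Real.log_le_sub_one_of_pos (inv_pos.2 h)
  rw [Real.log_inv] at h2
  have := inv_pos.2 h
  rw [abs_le]
  constructor <;> linarith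

lemma abs_log_norm_sub_div_le {n : ℕ} {R : ℝ} {x : E n} (hx : ‖x‖ ≤ R) (y : E n) :
    |Real.log (‖x - y‖ / (1 + ‖y‖))| ≤ (2 * R + 3) + (R + 1) * (‖x - y‖ ^ 2)⁻¹ := by
  have hR : 0 ≤ R := (norm_nonneg x).trans hx
  rcases eq_or_ne x y with rfl | hxy
  · simp; linarith
  have hd : 0 < ‖x - y‖ := by simpa [sub_eq_zero] using hxy
  have hy := norm_nonneg y
  refine (abs_log_le_add_inv (by positivity)).trans ?_
  have h1 : ‖x - y‖ / (1 + ‖y‖) ≤ R + 1 := by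
    rw [div_le_iff₀ (by positivity)]
    have := norm_sub_le x y
    nlinarith
  have h2 : (‖x - y‖ / (1 + ‖y‖))⁻¹ ≤ 1 + (R + 1) * ‖x - y‖⁻¹ := by
    rw [inv_div, div_le_iff₀ hd]
    have : ‖y‖ ≤ ‖x‖ + ‖x - y‖ := by
      have := norm_sub_le x (x - y); simpa using this
    have e : (1 + (R + 1) * ‖x - y‖⁻¹) * ‖x - y‖ = ‖x - y‖ + (R + 1) := by field_simp
    rw [e]; linarith
  have h3 : ‖x - y‖⁻¹ ≤ 1 + (‖x - y‖ ^ 2)⁻¹ := by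
    rw [← inv_pow]; nlinarith [sq_nonneg (‖x - y‖⁻¹ - 1), inv_pos.2 hd]
  nlinarith

lemma integrable_prod_log {n : ℕ} (hn : 3 ≤ n) {f : E n → ℝ} (hf : Integrable f)
    (R : ℝ) : Integrable (fun p : E n × E n => Real.log (‖p.1 - p.2‖ / (1 + ‖p.2‖)) * f p.2)
      ((volume.restrict (Metric.closedBall 0 R)).prod volume) := by
  have hm : Measurable fun p : E n × E n => Real.log (‖p.1 - p.2‖ / (1 + ‖p.2‖)) := by fun_prop
  have : IsFiniteMeasure (volume.restrict (Metric.closedBall (0 : E n) R)) :=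
    ⟨by simpa using measure_closedBall_lt_top⟩
  have h1 : Integrable (fun p : E n × E n => f p.2)
    ((volume.restrict (Metric.closedBall 0 R)).prod volume) := hf.comp_snd _
  refine ((h1.norm.const_mul (2 * R + 3)).add
    ((integrable_prod_inv_norm_sub_sq hn hf R).norm.const_mul (R + 1))).mono'
    (hm.aestronglyMeasurable.mul hf.1.comp_snd) ?_
  have hae : ∀ᵐ p : E n × E n ∂((volume.restrict (Metric.closedBall 0 R)).prod volume),
      p.1 ∈ Metric.closedBall (0 : E n) R :=
    Measure.quasiMeasurePreserving_fst.ae (ae_restrict_mem Metric.isClosed_closedBall.measurableSet)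
  filter_upwards [hae] with p hp
  have := abs_log_norm_sub_div_le (mem_closedBall_zero_iff.1 hp) p.2
  simp only [Pi.add_apply]
  rw [norm_mul, norm_mul, Real.norm_eq_abs,
    Real.norm_of_nonneg (r := (‖p.1 - p.2‖ ^ 2)⁻¹) (by positivity)]
  nlinarith [norm_nonneg (f p.2), mul_le_mul_of_nonneg_right this (norm_nonneg (f p.2))]

lemma integrable_prod_logGrad {n : ℕ} (hn : 3 ≤ n) {f : E n → ℝ} (hf : Integrable f)
    (R : ℝ) : Integrable (fun p : E n × E n => f p.2 • logGrad (p.1 - p.2))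
      ((volume.restrict (Metric.closedBall 0 R)).prod volume) := by
  have hm : Measurable fun p : E n × E n => logGrad (p.1 - p.2) := by fun_prop
  have : IsFiniteMeasure (volume.restrict (Metric.closedBall (0 : E n) R)) :=
    ⟨by simpa using measure_closedBall_lt_top⟩
  have h1 : Integrable (fun p : E n × E n => f p.2)
    ((volume.restrict (Metric.closedBall 0 R)).prod volume) := hf.comp_snd _
  refine (h1.norm.add (integrable_prod_inv_norm_sub_sq hn hf R).norm).mono'
    (hf.1.comp_snd.smul hm.aestronglyMeasurable) (.of_forall fun p => ?_)
  simp only [Pi.add_apply]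
  rw [norm_smul, norm_mul, Real.norm_of_nonneg (r := (‖p.1 - p.2‖ ^ 2)⁻¹) (by positivity)]
  nlinarith [norm_nonneg (f p.2),
    mul_le_mul_of_nonneg_left (norm_logGrad_le (p.1 - p.2)) (norm_nonneg (f p.2))]

lemma ae_of_forall_ae_restrict_closedBall {n : ℕ} {p : E n → Prop}
    (h : ∀ R : ℝ, ∀ᵐ x ∂(volume.restrict (Metric.closedBall (0 : E n) R)), p x) :
    ∀ᵐ x, p x := by
  have h' : ∀ k : ℕ, ∀ᵐ x : E n, x ∈ Metric.closedBall (0 : E n) k → p x := fun k =>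
    (ae_restrict_iff' Metric.isClosed_closedBall.measurableSet).1 (h k)
  filter_upwards [ae_all_iff.2 h'] with x hx
  obtain ⟨k, hk⟩ := exists_nat_ge ‖x‖
  exact hx k (by simpa using hk)

lemma integrable_log_norm_div {n : ℕ} {f : E n → ℝ} (hf : Integrable f) {x₀ : E n} (h0 : x₀ ≠ 0)
    (h : Integrable fun y => Real.log (‖y‖ / ‖x₀ - y‖) * f y) :
    Integrable fun y => Real.log (‖y‖ / (1 + ‖y‖)) * f y := by
  have hx : 0 < ‖x₀‖ := norm_pos_iff.2 h0
  set A : ℝ := 2 * ‖x₀‖ + 2 / ‖x₀‖ + 2 with hA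
  refine ((hf.norm.const_mul A).add h.norm).mono' ?_ (.of_forall fun y => ?_)
  · exact Measurable.aestronglyMeasurable (by fun_prop) |>.mul hf.1
  have key : |Real.log (‖y‖ / (1 + ‖y‖))| ≤ A + |Real.log (‖y‖ / ‖x₀ - y‖)| := by
    have hA0 : 0 ≤ A := by positivity
    rcases eq_or_ne y 0 with rfl | hy
    · simpa using hA0
    have hy0 : 0 < ‖y‖ := norm_pos_iff.2 hy
    rw [Real.log_div hy0.ne' (by positivity)]
    have l1 := Real.log_le_sub_one_of_pos (show 0 < 1 + ‖y‖ by positivity)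
    have l2 := Real.log_nonneg (show 1 ≤ 1 + ‖y‖ by linarith)
    rcases le_or_gt (‖x₀‖ / 2) ‖y‖ with hc | hc
    · have h3 : Real.log (1 + ‖y‖) - Real.log ‖y‖ ≤ 2 / ‖x₀‖ := by
        rw [← Real.log_div (by positivity) hy0.ne']
        refine (Real.log_le_sub_one_of_pos (by positivity)).trans ?_
        rw [show (1 + ‖y‖) / ‖y‖ - 1 = 1 / ‖y‖ by field_simp; ring]
        rw [div_le_div_iff₀ hy0 hx]; linarith
      have h4 : Real.log ‖y‖ ≤ Real.log (1 + ‖y‖) := Real.log_le_log hy0 (by linarith)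
      rw [abs_of_nonpos (by linarith)]
      have := abs_nonneg (Real.log (‖y‖ / ‖x₀ - y‖))
      linarith
    · have t1 := norm_sub_norm_le x₀ y
      have t2 := norm_sub_le x₀ y
      have hd : 0 < ‖x₀ - y‖ := by linarith
      rw [Real.log_div hy0.ne' hd.ne']
      have l3 := abs_log_le_add_inv hd.le
      have l4 : ‖x₀ - y‖⁻¹ ≤ 2 / ‖x₀‖ := by
        rw [inv_eq_one_div, div_le_div_iff₀ hd hx]; linarith
      have e1 := abs_le.1 l3
      have e2 := neg_abs_le (Real.log ‖y‖ - Real.log ‖x₀ - y‖)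
      have e3 := le_abs_self (Real.log ‖y‖ - Real.log ‖x₀ - y‖)
      rw [abs_le]
      constructor <;> linarith
  simp only [Pi.add_apply, norm_mul, Real.norm_eq_abs]
  nlinarith [mul_le_mul_of_nonneg_right key (abs_nonneg (f y))]

lemma exists_ae_eq_sub_integral_log {n : ℕ} (hn : 3 ≤ n) {u f : E n → ℝ} (hf : Integrable f)
    {c C : ℝ} (hu : ∀ x, u x = c * (∫ y, Real.log (‖y‖ / ‖x - y‖) * f y) + C)
    (hne : ∃ x, u x ≠ C) :
    ∃ C', ∀ᵐ x, u x = C' - c * ∫ y, Real.log (‖x - y‖ / (1 + ‖y‖)) * f y := by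
  have : Nonempty (Fin n) := ⟨⟨0, by omega⟩⟩
  obtain ⟨x₀, hx₀⟩ := hne
  have hi : Integrable fun y => Real.log (‖y‖ / ‖x₀ - y‖) * f y := by
    by_contra h
    exact hx₀ (by rw [hu, integral_undef h]; simp)
  have h0 : x₀ ≠ 0 := by
    rintro rfl
    apply hx₀
    rw [hu]
    have (y : E n) : Real.log (‖y‖ / ‖0 - y‖) = 0 := by
      rcases eq_or_ne y 0 with rfl | hy
      · simp
      · simp [hy]
    simp only [this]
    simp
  have hJ := integrable_log_norm_div hf h0 hi
  refine ⟨C + c * ∫ y, Real.log (‖y‖ / (1 + ‖y‖)) * f y, ?_⟩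
  have hae : ∀ᵐ x : E n, Integrable fun y => Real.log (‖x - y‖ / (1 + ‖y‖)) * f y :=
    ae_of_forall_ae_restrict_closedBall fun R => (integrable_prod_log hn hf R).prod_right_ae
  filter_upwards [hae] with x hx
  have hs (z : E n) : ∀ᵐ y : E n, y ≠ z := by
    filter_upwards [compl_mem_ae_iff.2 (measure_singleton (μ := (volume : Measure (E n))) z)]
      with y hy using hy
  have : ∫ y, Real.log (‖y‖ / ‖x - y‖) * f y = (∫ y, Real.log (‖y‖ / (1 + ‖y‖)) * f y) -
      ∫ y, Real.log (‖x - y‖ / (1 + ‖y‖)) * f y := by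
    rw [← integral_sub hJ hx]
    apply integral_congr_ae
    filter_upwards [hs 0, hs x] with y hy hyx
    have a1 : ‖y‖ ≠ 0 := norm_ne_zero_iff.2 hy
    have a2 : ‖x - y‖ ≠ 0 := norm_ne_zero_iff.2 (sub_ne_zero.2 hyx.symm)
    have a3 : 1 + ‖y‖ ≠ 0 := by positivity
    rw [Real.log_div a1 a2, Real.log_div a1 a3, Real.log_div a2 a3]
    ring
  rw [hu, this]
  ring

lemma locallyIntegrable_of_forall_closedBall {n : ℕ} {F : Type*} [NormedAddCommGroup F]
    {h : E n → F} (H : ∀ R : ℝ, IntegrableOn h (Metric.closedBall 0 R)) : LocallyIntegrable h :=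
  fun x => ⟨Metric.closedBall 0 (‖x‖ + 1), Filter.mem_of_superset
    (Metric.isOpen_ball.mem_nhds (show x ∈ Metric.ball 0 (‖x‖ + 1) by simp))
    Metric.ball_subset_closedBall, H _⟩

lemma exists_eq_zero_of_notMem_closedBall {n : ℕ} {g : E n → ℝ} (hgc : HasCompactSupport g) :
    ∃ R : ℝ, ∀ x, x ∉ Metric.closedBall (0 : E n) R → g x = 0 := by
  obtain ⟨R, hR⟩ := hgc.isBounded.subset_closedBall (0 : E n)
  exact ⟨R, fun x hx => image_eq_zero_of_notMem_tsupport fun h => hx (hR h)⟩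

lemma integral_mul_integral_swap {n : ℕ} {g : E n → ℝ} (hg : Continuous g)
    (hgc : HasCompactSupport g) {H : E n × E n → ℝ}
    (hH : ∀ R : ℝ, Integrable H ((volume.restrict (Metric.closedBall 0 R)).prod volume)) :
    ∫ x, g x * ∫ y, H (x, y) = ∫ y, ∫ x, g x * H (x, y) := by
  obtain ⟨R, hR⟩ := exists_eq_zero_of_notMem_closedBall hgc
  obtain ⟨M, hM⟩ := hg.bounded_above_of_compact_support hgc
  have hint : Integrable (fun p : E n × E n => g p.1 * H p)
      ((volume.restrict (Metric.closedBall 0 R)).prod volume) :=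
    (hH R).bdd_mul (hg.comp continuous_fst).aestronglyMeasurable (.of_forall fun p => hM p.1)
  have := integral_integral_swap (f := fun x y => g x * H (x, y)) hint
  rw [← setIntegral_eq_integral_of_forall_compl_eq_zero (s := Metric.closedBall 0 R)
    (fun x hx => by rw [hR x hx, zero_mul])]
  simp only [← integral_const_mul]
  rw [this]
  refine integral_congr_ae (.of_forall fun y => ?_)
  exact setIntegral_eq_integral_of_forall_compl_eq_zero fun x hx => by rw [hR x hx, zero_mul]

lemma inner_gradient_eq_fderiv {n : ℕ} (u : E n → ℝ) (x v : E n) :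
    inner ℝ v (gradient u x) = fderiv ℝ u x v := by
  rw [real_inner_comm, gradient, InnerProductSpace.toDual_symm_apply]

lemma continuous_gradient {n : ℕ} {u : E n → ℝ} (hu : ContDiff ℝ 1 u) : Continuous (gradient u) :=
  (InnerProductSpace.toDual ℝ (E n)).symm.continuous.comp (hu.continuous_fderiv one_ne_zero)

lemma integral_fderiv_eq_zero_of_hasCompactSupport {n : ℕ} {g : E n → ℝ} (hg : ContDiff ℝ 1 g)
    (hgc : HasCompactSupport g) (v : E n) : ∫ x, fderiv ℝ g x v = 0 := by
  have := integral_mul_fderiv_of_hasCompactSupport hg hgc (h := fun _ => 1) contDiff_const v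
  simpa using this

lemma integral_fderiv_mul_log_norm_sub_div {n : ℕ} (hn : 3 ≤ n) {f g : E n → ℝ}
    (hg : ContDiff ℝ 1 g) (hgc : HasCompactSupport g) (y v : E n) :
    ∫ x, fderiv ℝ g x v * (Real.log (‖x - y‖ / (1 + ‖y‖)) * f y) =
      -∫ x, g x * (f y * inner ℝ v (logGrad (x - y))) := by
  have : Nonempty (Fin n) := ⟨⟨0, by omega⟩⟩
  have c1 : Continuous fun x => fderiv ℝ g x v :=
    (hg.continuous_fderiv one_ne_zero).clm_apply continuous_const
  have s1 : HasCompactSupport fun x => fderiv ℝ g x v := hgc.fderiv_apply ℝ v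
  have z1 := integral_fderiv_eq_zero_of_hasCompactSupport hg hgc v
  have hne : ∀ᵐ x : E n, ‖x - y‖ ≠ 0 := by
    filter_upwards [compl_mem_ae_iff.2 (measure_singleton (μ := (volume : Measure (E n))) y)]
      with x hx using norm_ne_zero_iff.2 (sub_ne_zero.2 hx)
  have e1 : ∀ᵐ x : E n, fderiv ℝ g x v * (Real.log (‖x - y‖ / (1 + ‖y‖)) * f y) =
      f y * (fderiv ℝ g x v * Real.log ‖x - y‖) -
        f y * Real.log (1 + ‖y‖) * fderiv ℝ g x v := by
    filter_upwards [hne] with x a2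
    rw [Real.log_div a2 (by positivity)]
    ring
  have i2 : Integrable fun x => f y * Real.log (1 + ‖y‖) * fderiv ℝ g x v :=
    (c1.integrable_of_hasCompactSupport s1).const_mul _
  have i1 : Integrable fun x => fderiv ℝ g x v * Real.log ‖x - y‖ := by
    have := (integrable_mul_inv_norm_sub_sq hn c1.norm s1.norm y)
    have i3 : Integrable fun x => ‖fderiv ℝ g x v‖ * ‖x - y‖ ^ 2 :=
      (c1.norm.mul (by fun_prop)).integrable_of_hasCompactSupport s1.norm.mul_right
    have hlog : Measurable fun x : E n => Real.log ‖x - y‖ := by fun_prop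
    refine (this.add i3).mono' (c1.aestronglyMeasurable.mul hlog.aestronglyMeasurable) ?_
    filter_upwards [hne] with x a2
    have := abs_half_log_sq_add_le a2 le_rfl zero_le_one
    rw [add_zero, Real.log_pow, Nat.cast_ofNat, ← mul_assoc, one_div,
      inv_mul_cancel₀ two_ne_zero, one_mul] at this
    rw [norm_mul, Pi.add_apply, ← mul_add, add_comm]
    exact mul_le_mul_of_nonneg_left this (norm_nonneg _)
  rw [integral_congr_ae e1, integral_sub (i1.const_mul _) i2, integral_const_mul,
    integral_const_mul, z1, integral_fderiv_mul_log_norm_sub hn hg hgc y v, mul_zero, sub_zero,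
    mul_neg, ← integral_const_mul]
  congr 1
  refine integral_congr_ae (.of_forall fun x => ?_)
  simp only [real_inner_comm v]
  ring

lemma ae_gradient_eq_integral_logGrad {n : ℕ} (hn : 3 ≤ n) {u f : E n → ℝ} (hu : ContDiff ℝ 1 u)
    (hf : Integrable f) {c C : ℝ}
    (h : ∀ᵐ x, u x = C - c * ∫ y, Real.log (‖x - y‖ / (1 + ‖y‖)) * f y) :
    ∀ᵐ x, gradient u x = (-c) • ∫ y, f y • logGrad (x - y) := by
  have : Nonempty (Fin n) := ⟨⟨0, by omega⟩⟩
  have hG : LocallyIntegrable fun x : E n => (-c) • ∫ y, f y • logGrad (x - y) :=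
    locallyIntegrable_of_forall_closedBall fun R =>
      (integrable_prod_logGrad hn hf R).integral_prod_left.smul (-c)
  have hU := (continuous_gradient hu).locallyIntegrable (μ := volume)
  refine ae_eq_of_integral_contDiff_smul_eq hU hG fun g hg' hgc => ?_
  have hg : ContDiff ℝ 1 g := hg'.of_le (by exact_mod_cast le_top)
  have hIU := hU.integrable_smul_left_of_hasCompactSupport hg.continuous hgc
  have hIG := hG.integrable_smul_left_of_hasCompactSupport hg.continuous hgc
  refine ext_inner_left ℝ fun v => ?_
  rw [← integral_inner hIU, ← integral_inner hIG]
  simp only [real_inner_smul_right, inner_gradient_eq_fderiv]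
  have c1 : Continuous fun x => fderiv ℝ g x v :=
    (hg.continuous_fderiv one_ne_zero).clm_apply continuous_const
  have s1 : HasCompactSupport fun x => fderiv ℝ g x v := hgc.fderiv_apply ℝ v
  have hfx : ∀ᵐ x : E n, Integrable fun y => f y • logGrad (x - y) :=
    ae_of_forall_ae_restrict_closedBall fun R => (integrable_prod_logGrad hn hf R).prod_right_ae
  have z1 := integral_fderiv_eq_zero_of_hasCompactSupport hg hgc v
  have hKv (R : ℝ) : Integrable (fun p : E n × E n => f p.2 * inner ℝ v (logGrad (p.1 - p.2)))
      ((volume.restrict (Metric.closedBall 0 R)).prod volume) := by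
    simpa only [real_inner_smul_right] using (integrable_prod_logGrad hn hf R).const_inner (𝕜 := ℝ) v
  have hIL : Integrable fun x => fderiv ℝ g x v *
      ∫ y, Real.log (‖x - y‖ / (1 + ‖y‖)) * f y :=
    (locallyIntegrable_of_forall_closedBall fun R =>
      (integrable_prod_log hn hf R).integral_prod_left).integrable_smul_left_of_hasCompactSupport
        c1 s1
  calc ∫ x, g x * fderiv ℝ u x v = -∫ x, fderiv ℝ g x v * u x :=
        integral_mul_fderiv_of_hasCompactSupport hg hgc hu v
    _ = -∫ x, (C * fderiv ℝ g x v -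
          c * (fderiv ℝ g x v * ∫ y, Real.log (‖x - y‖ / (1 + ‖y‖)) * f y)) := by
        congr 1
        apply integral_congr_ae
        filter_upwards [h] with x hx
        rw [hx]; ring
    _ = c * ∫ x, fderiv ℝ g x v * ∫ y, Real.log (‖x - y‖ / (1 + ‖y‖)) * f y := by
        rw [integral_sub ((c1.integrable_of_hasCompactSupport s1).const_mul C)
          (hIL.const_mul c), integral_const_mul, integral_const_mul, z1]
        ring
    _ = c * ∫ y, ∫ x, fderiv ℝ g x v * (Real.log (‖x - y‖ / (1 + ‖y‖)) * f y) := by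
        rw [integral_mul_integral_swap c1 s1 (integrable_prod_log hn hf)]
    _ = (-c) * ∫ y, ∫ x, g x * (f y * inner ℝ v (logGrad (x - y))) := by
        simp only [integral_fderiv_mul_log_norm_sub_div hn hg hgc, integral_neg]; ring
    _ = (-c) * ∫ x, g x * ∫ y, f y * inner ℝ v (logGrad (x - y)) := by
        rw [integral_mul_integral_swap hg.continuous hgc hKv]
    _ = ∫ x, g x * (-c * inner ℝ v (∫ y, f y • logGrad (x - y))) := by
        rw [← integral_const_mul]
        apply integral_congr_ae
        filter_upwards [hfx] with x hx
        rw [← integral_inner hx]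
        simp only [real_inner_smul_right]
        ring

lemma lintegral_mul_sq_le {α : Type*} [MeasurableSpace α] {μ : Measure α} {a b : α → ENNReal}
    (ha : AEMeasurable a μ) (hb : AEMeasurable b μ) :
    (∫⁻ x, a x * b x ∂μ) ^ 2 ≤ (∫⁻ x, a x ∂μ) * ∫⁻ x, a x * b x ^ 2 ∂μ := by
  have h := ENNReal.lintegral_mul_norm_pow_le (μ := μ) (p := 1 / 2) (q := 1 / 2) ha
    (ha.mul (hb.pow_const 2)) (by norm_num) (by norm_num) (by norm_num)
  have sq_rpow (t : ENNReal) : (t ^ (1 / 2 : ℝ)) ^ 2 = t := by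
    rw [← ENNReal.rpow_natCast, ← ENNReal.rpow_mul]; norm_num
  have rpow_sq (t : ENNReal) : (t ^ 2) ^ (1 / 2 : ℝ) = t := by
    rw [← ENNReal.rpow_natCast, ← ENNReal.rpow_mul]; norm_num
  have e (x : α) : a x ^ (1 / 2 : ℝ) * ((a * fun x => b x ^ 2) x) ^ (1 / 2 : ℝ) = a x * b x := by
    rw [Pi.mul_apply, ENNReal.mul_rpow_of_nonneg _ _ (by norm_num), rpow_sq, ← mul_assoc, ← sq,
      sq_rpow]
  simp only [e] at h
  calc (∫⁻ x, a x * b x ∂μ) ^ 2 ≤ _ := pow_le_pow_left₀ zero_le h 2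
    _ = _ := by rw [mul_pow, sq_rpow, sq_rpow]; rfl

/-- The squared `L²` distance on `B` between `logGrad` and its translate by `z`. -/
def logGradShift {n : ℕ} (B : Set (E n)) (z : E n) : ENNReal :=
  ∫⁻ x in B, ‖logGrad (x - z) - logGrad x‖ₑ ^ 2

lemma measurable_logGradShift {n : ℕ} (B : Set (E n)) : Measurable (logGradShift B) := by
  have hm : Measurable fun p : E n × E n => ‖logGrad (p.2 - p.1) - logGrad p.2‖ₑ ^ 2 := by
    fun_prop
  exact hm.lintegral_prod_right'

lemma enorm_sq_logGrad {n : ℕ} (z : E n) : ‖logGrad z‖ₑ ^ 2 = ENNReal.ofReal ((‖z‖ ^ 2)⁻¹) := by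
  rw [← norm_logGrad_sq, ENNReal.ofReal_pow (norm_nonneg _), ofReal_norm]

lemma exists_logGradShift_le {n : ℕ} (hn : 3 ≤ n) {B : Set (E n)} (hB : volume B < ⊤) :
    ∃ M < ⊤, ∀ z, logGradShift B z ≤ M := by
  set M := volume B + ∫⁻ z in Metric.ball (0 : E n) 1, ENNReal.ofReal ((‖z‖ ^ 2)⁻¹) with hM
  have hMt : M < ⊤ := ENNReal.add_lt_top.2 ⟨hB, lintegral_ball_inv_norm_sq_lt_top hn⟩
  refine ⟨2 * (M + M), ENNReal.mul_lt_top (by simp) (ENNReal.add_lt_top.2 ⟨hMt, hMt⟩), fun z => ?_⟩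
  have le (a b : E n) : ‖a - b‖ₑ ^ 2 ≤ 2 * (‖a‖ₑ ^ 2 + ‖b‖ₑ ^ 2) := by
    have h : ‖a - b‖ ^ 2 ≤ 2 * (‖a‖ ^ 2 + ‖b‖ ^ 2) := by
      nlinarith [norm_sub_le a b, norm_nonneg (a - b), sq_nonneg (‖a‖ - ‖b‖)]
    simp only [← ofReal_norm, ← ENNReal.ofReal_pow (norm_nonneg _)]
    rw [← ENNReal.ofReal_add (by positivity) (by positivity)]
    refine (ENNReal.ofReal_le_ofReal h).trans (le_of_eq ?_)
    rw [ENNReal.ofReal_mul (by norm_num), ENNReal.ofReal_ofNat]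
  calc logGradShift B z
      ≤ ∫⁻ x in B, 2 * (‖logGrad (x - z)‖ₑ ^ 2 + ‖logGrad x‖ₑ ^ 2) :=
        lintegral_mono fun x => le _ _
    _ = 2 * ((∫⁻ x in B, ‖logGrad (x - z)‖ₑ ^ 2) + ∫⁻ x in B, ‖logGrad x‖ₑ ^ 2) := by
        rw [lintegral_const_mul _ (by fun_prop), lintegral_add_left (by fun_prop)]
    _ ≤ 2 * (M + M) := by
        simp only [enorm_sq_logGrad]
        gcongr
        · exact lintegral_inv_norm_sub_sq_le B z
        · simpa using lintegral_inv_norm_sub_sq_le B (0 : E n)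

lemma tendsto_logGradShift {n : ℕ} {B : Set (E n)} (hBm : MeasurableSet B) (hB : volume B < ⊤)
    (hB1 : ∀ x ∈ B, 1 ≤ ‖x‖) : Tendsto (logGradShift B) (nhds 0) (nhds 0) := by
  have h0 : (∫⁻ x in B, (0 : ENNReal)) = 0 := lintegral_zero
  rw [← h0]
  have hle (w : E n) (hw : 1 / 2 ≤ ‖w‖) : ‖logGrad w‖ ≤ 2 := by
    have h := norm_logGrad_sq w
    have h1 : (‖w‖ ^ 2)⁻¹ ≤ ((1 / 2 : ℝ) ^ 2)⁻¹ := by gcongr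
    norm_num at h1
    nlinarith [norm_nonneg (logGrad w)]
  refine tendsto_lintegral_filter_of_dominated_convergence (fun _ => 16)
    (.of_forall fun z => by fun_prop) ?_ ?_ ?_
  · filter_upwards [Metric.ball_mem_nhds (0 : E n) (show (0 : ℝ) < 1 / 2 by norm_num)] with z hz
    filter_upwards [ae_restrict_mem hBm] with x hx
    have hz' : ‖z‖ < 1 / 2 := by simpa using hz
    have hx1 := hB1 x hx
    have h1 := hle x (by linarith)
    have h2 := hle (x - z) (by linarith [norm_sub_norm_le x z])
    have h3 : ‖logGrad (x - z) - logGrad x‖ ≤ 4 := (norm_sub_le _ _).trans (by linarith)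
    have h4 : ‖logGrad (x - z) - logGrad x‖ₑ ≤ 4 := by
      rw [← ofReal_norm]
      exact ENNReal.ofReal_le_of_le_toReal (by simpa using h3)
    calc _ ≤ (4 : ENNReal) ^ 2 := pow_le_pow_left₀ zero_le h4 2
      _ = 16 := by norm_num
  · simpa using ENNReal.mul_ne_top (by simp) hB.ne
  · filter_upwards [ae_restrict_mem hBm] with x hx
    have hx0 : x - 0 ≠ 0 := by
      have := hB1 x hx
      rw [sub_zero]; rintro rfl; norm_num at this
    have h1 : Tendsto (fun z : E n => logGrad (x - z) - logGrad x) (nhds 0) (nhds 0) := by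
      have := ((continuousAt_logGrad hx0).tendsto.comp
        ((continuous_const.sub continuous_id).tendsto' (0 : E n) (x - 0) rfl)).sub_const (logGrad x)
      simpa using this
    simpa using ENNReal.Tendsto.pow (n := 2) h1.enorm

lemma ae_smul_gradient_eq {n : ℕ} (hn : 3 ≤ n) {u f : E n → ℝ} (hf : Integrable f) {c : ℝ}
    (h : ∀ᵐ x, gradient u x = (-c) • ∫ y, f y • logGrad (x - y)) {r : ℝ} (hr : 0 < r) :
    ∀ᵐ x, r • gradient u (r • x) + (c * ∫ y, f y) • logGrad x =
      (-c) • ∫ y, f y • (logGrad (x - r⁻¹ • y) - logGrad x) := by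
  have hi : ∀ᵐ x : E n, Integrable fun y => f y • logGrad (x - y) :=
    ae_of_forall_ae_restrict_closedBall fun R => (integrable_prod_logGrad hn hf R).prod_right_ae
  have q : Measure.QuasiMeasurePreserving (fun x : E n => r • x) volume volume := by
    refine ⟨by fun_prop, ?_⟩
    rw [Measure.map_addHaar_smul _ hr.ne']
    exact Measure.smul_absolutelyContinuous
  filter_upwards [q.ae h, q.ae hi] with x hx hix
  have e (y : E n) : f y • logGrad (x - r⁻¹ • y) = r • (f y • logGrad (r • x - y)) := by
    rw [smul_comm, ← logGrad_smul hr.ne' (x - r⁻¹ • y), smul_sub, smul_inv_smul₀ hr.ne']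
  simp only [smul_sub, e]
  have i1 : Integrable fun y => r • (f y • logGrad (r • x - y)) := hix.smul r
  rw [integral_sub i1 (hf.smul_const _), integral_smul, integral_smul_const, hx]
  module

lemma lintegral_smul_gradient_add_le {n : ℕ} (hn : 3 ≤ n) {u f : E n → ℝ} (hf : Integrable f)
    {c : ℝ} (h : ∀ᵐ x, gradient u x = (-c) • ∫ y, f y • logGrad (x - y)) {r : ℝ} (hr : 0 < r)
    (B : Set (E n)) :
    ∫⁻ x in B, ‖r • gradient u (r • x) + (c * ∫ y, f y) • logGrad x‖ₑ ^ 2 ≤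
      ‖c‖ₑ ^ 2 * ((∫⁻ y, ‖f y‖ₑ) * ∫⁻ y, ‖f y‖ₑ * logGradShift B (r⁻¹ • y)) := by
  have hm : Measurable fun p : E n × E n => ‖logGrad (p.1 - r⁻¹ • p.2) - logGrad p.1‖ₑ := by
    fun_prop
  have hm2 : AEMeasurable (fun p : E n × E n =>
      ‖f p.2‖ₑ * ‖logGrad (p.1 - r⁻¹ • p.2) - logGrad p.1‖ₑ ^ 2)
      ((volume.restrict B).prod volume) :=
    hf.1.comp_snd.enorm.mul (hm.pow_const 2).aemeasurable
  have hpt : ∀ᵐ x : E n, ‖r • gradient u (r • x) + (c * ∫ y, f y) • logGrad x‖ₑ ^ 2 ≤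
      ‖c‖ₑ ^ 2 * ((∫⁻ y, ‖f y‖ₑ) *
        ∫⁻ y, ‖f y‖ₑ * ‖logGrad (x - r⁻¹ • y) - logGrad x‖ₑ ^ 2) := by
    filter_upwards [ae_smul_gradient_eq hn hf h hr] with x hx
    rw [hx, enorm_smul, enorm_neg, mul_pow]
    gcongr
    calc ‖∫ y, f y • (logGrad (x - r⁻¹ • y) - logGrad x)‖ₑ ^ 2
        ≤ (∫⁻ y, ‖f y‖ₑ * ‖logGrad (x - r⁻¹ • y) - logGrad x‖ₑ) ^ 2 := by
          simp only [← enorm_smul]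
          exact pow_le_pow_left₀ zero_le (enorm_integral_le_lintegral_enorm _) 2
      _ ≤ _ := lintegral_mul_sq_le hf.1.enorm (by fun_prop)
  calc ∫⁻ x in B, ‖r • gradient u (r • x) + (c * ∫ y, f y) • logGrad x‖ₑ ^ 2
      ≤ ∫⁻ x in B, ‖c‖ₑ ^ 2 * ((∫⁻ y, ‖f y‖ₑ) *
        ∫⁻ y, ‖f y‖ₑ * ‖logGrad (x - r⁻¹ • y) - logGrad x‖ₑ ^ 2) :=
        lintegral_mono_ae (ae_restrict_of_ae hpt)
    _ = ‖c‖ₑ ^ 2 * ((∫⁻ y, ‖f y‖ₑ) * ∫⁻ x in B,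
        ∫⁻ y, ‖f y‖ₑ * ‖logGrad (x - r⁻¹ • y) - logGrad x‖ₑ ^ 2) := by
        rw [lintegral_const_mul' _ _ (by simp), lintegral_const_mul' _ _ hf.2.ne]
    _ = _ := by
        congr 2
        rw [lintegral_lintegral_swap hm2]
        congr with y
        rw [lintegral_const_mul' _ _ (by simp)]
        rfl

lemma tendsto_integral_norm_smul_gradient_add_sq {n : ℕ} (hn : 3 ≤ n) {u f : E n → ℝ}
    (hu : ContDiff ℝ 1 u) (hf : Integrable f)
    {c : ℝ} (h : ∀ᵐ x, gradient u x = (-c) • ∫ y, f y • logGrad (x - y))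
    {B : Set (E n)} (hBm : MeasurableSet B) (hB : volume B < ⊤) (hB1 : ∀ x ∈ B, 1 ≤ ‖x‖) :
    Tendsto (fun r : ℝ => ∫ x in B, ‖r • gradient u (r • x) + (c * ∫ y, f y) • logGrad x‖ ^ 2)
      atTop (nhds 0) := by
  obtain ⟨M, hMt, hM⟩ := exists_logGradShift_le hn hB
  have T1 : Tendsto (fun r : ℝ => ∫⁻ y, ‖f y‖ₑ * logGradShift B (r⁻¹ • y)) atTop (nhds 0) := by
    have h0 : (∫⁻ _ : E n, (0 : ENNReal)) = 0 := lintegral_zero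
    rw [← h0]
    refine tendsto_lintegral_filter_of_dominated_convergence' (fun y => ‖f y‖ₑ * M)
      (.of_forall fun r => ?_) (.of_forall fun r => .of_forall fun y => ?_) ?_ ?_
    · have : Measurable fun y : E n => logGradShift B (r⁻¹ • y) :=
        (measurable_logGradShift B).comp (by fun_prop)
      exact hf.1.enorm.mul this.aemeasurable
    · gcongr; exact hM _
    · rw [lintegral_mul_const' _ _ hMt.ne]
      exact ENNReal.mul_ne_top hf.2.ne hMt.ne
    · filter_upwards with y
      have h1 : Tendsto (fun r : ℝ => r⁻¹ • y) atTop (nhds 0) := by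
        simpa using (tendsto_inv_atTop_zero (𝕜 := ℝ)).smul_const y
      have := ENNReal.Tendsto.const_mul (a := ‖f y‖ₑ)
        ((tendsto_logGradShift hBm hB hB1).comp h1) (Or.inr (by simp))
      simpa using this
  have T2 : Tendsto (fun r : ℝ =>
      ‖c‖ₑ ^ 2 * ((∫⁻ y, ‖f y‖ₑ) * ∫⁻ y, ‖f y‖ₑ * logGradShift B (r⁻¹ • y))) atTop (nhds 0) := by
    have := ENNReal.Tendsto.const_mul (a := ‖c‖ₑ ^ 2) (ENNReal.Tendsto.const_mul
      (a := ∫⁻ y, ‖f y‖ₑ) T1 (Or.inr hf.2.ne)) (Or.inr (by simp))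
    simpa using this
  have T3 : Tendsto (fun r : ℝ =>
      ∫⁻ x in B, ‖r • gradient u (r • x) + (c * ∫ y, f y) • logGrad x‖ₑ ^ 2) atTop (nhds 0) := by
    refine tendsto_of_tendsto_of_tendsto_of_le_of_le' tendsto_const_nhds T2
      (.of_forall fun r => zero_le) ?_
    filter_upwards [eventually_gt_atTop 0] with r hr
    exact lintegral_smul_gradient_add_le hn hf h hr B
  have hc := continuous_gradient hu
  generalize c * ∫ y, f y = a at T3 ⊢
  refine ((ENNReal.tendsto_toReal ENNReal.zero_ne_top).comp T3).congr fun r => ?_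
  rw [integral_eq_lintegral_of_nonneg_ae (.of_forall fun x => by positivity)
    (Measurable.aestronglyMeasurable (by fun_prop))]
  simp only [Function.comp_apply, ENNReal.ofReal_pow (norm_nonneg _), ofReal_norm]

lemma gradient_comp_smul {n : ℕ} (u : E n → ℝ) (r : ℝ) (x : E n) :
    gradient (fun y => u (r • y)) x = r • gradient u (r • x) := by
  refine ext_inner_left ℝ fun v => ?_
  rw [inner_gradient_eq_fderiv, inner_smul_right, inner_gradient_eq_fderiv, fderiv_comp_smul]
  rfl

lemma lap_comp_smul {n : ℕ} {u : E n → ℝ} (hu : ContDiff ℝ 2 u) (r : ℝ) (x : E n) :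
    lap (fun y => u (r • y)) x = r ^ 2 * lap u (r • x) := by
  unfold lap
  rw [Finset.mul_sum]
  refine Finset.sum_congr rfl fun i _ => ?_
  have e : (fun y => fderiv ℝ (fun y => u (r • y)) y (EuclideanSpace.single i 1)) =
      fun y => r • (fun z => fderiv ℝ u z (EuclideanSpace.single i 1)) (r • y) := by
    ext y
    rw [fderiv_comp_smul]
    rfl
  have hd : ContDiff ℝ 1 fun y => fderiv ℝ u y (EuclideanSpace.single i 1) :=
    (hu.fderiv_right (m := 1) (by norm_num)).clm_apply contDiff_const
  have hs : DifferentiableAt ℝ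
      (fun y => (fun z => fderiv ℝ u z (EuclideanSpace.single i 1)) (r • y)) x :=
    (hd.comp (contDiff_const_smul r)).differentiable one_ne_zero x
  rw [e, fderiv_fun_const_smul hs, fderiv_comp_smul
    (f := fun z => fderiv ℝ u z (EuclideanSpace.single i 1))]
  simp
  ring

lemma fderiv_eq_sum {n : ℕ} (L : E n →L[ℝ] ℝ) (v : E n) :
    L v = ∑ i, v i * L (EuclideanSpace.single i 1) := by
  conv_lhs => rw [← (EuclideanSpace.basisFun (Fin n) ℝ).sum_repr v]
  simp

lemma integral_mul_neg_lap {n : ℕ} {η u : E n → ℝ} (hη : ContDiff ℝ 1 η)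
    (hηc : HasCompactSupport η) (hu : ContDiff ℝ 2 u) :
    ∫ x, η x * -lap u x = ∫ x, fderiv ℝ η x (gradient u x) := by
  have hd (i : Fin n) : ContDiff ℝ 1 fun y => fderiv ℝ u y (EuclideanSpace.single i 1) :=
    (hu.fderiv_right (m := 1) (by norm_num)).clm_apply contDiff_const
  have hg (x : E n) (i : Fin n) :
      gradient u x i = fderiv ℝ u x (EuclideanSpace.single i 1) := by
    rw [← inner_gradient_eq_fderiv, EuclideanSpace.inner_single_left, map_one, one_mul]
  have hdη := hη.continuous_fderiv one_ne_zero
  have e1 (x : E n) : η x * -lap u x = ∑ i, -(η x * fderiv ℝ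
      (fun y => fderiv ℝ u y (EuclideanSpace.single i 1)) x (EuclideanSpace.single i 1)) := by
    rw [lap, ← Finset.sum_neg_distrib, Finset.mul_sum]
    simp
  have e2 (x : E n) : fderiv ℝ η x (gradient u x) = ∑ i, fderiv ℝ η x (EuclideanSpace.single i 1) *
      fderiv ℝ u x (EuclideanSpace.single i 1) := by
    rw [fderiv_eq_sum]
    exact Finset.sum_congr rfl fun i _ => by rw [hg, mul_comm]
  simp only [e1, e2]
  rw [integral_finsetSum, integral_finsetSum]
  · refine Finset.sum_congr rfl fun i _ => ?_
    rw [integral_neg, integral_mul_fderiv_of_hasCompactSupport hη hηc (hd i), neg_neg]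
  · intro i _
    refine Continuous.integrable_of_hasCompactSupport ?_ ?_
    · exact (hdη.clm_apply continuous_const).mul (hd i).continuous
    · exact ((hηc.fderiv_apply (𝕜 := ℝ) _)).mul_right
  · intro i _
    refine (Continuous.integrable_of_hasCompactSupport ?_ ?_).neg
    · exact hη.continuous.mul (((hd i).continuous_fderiv one_ne_zero).clm_apply continuous_const)
    · exact hηc.mul_right

lemma integral_fderiv_apply_self {n : ℕ} {ζ : E n → ℝ} (hζ : ContDiff ℝ 1 ζ)
    (hζc : HasCompactSupport ζ) : ∫ x, fderiv ℝ ζ x x = -(n * ∫ x, ζ x) := by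
  have hd := hζ.continuous_fderiv one_ne_zero
  have hp (i : Fin n) : ContDiff ℝ 1 fun x : E n => x i := by fun_prop
  have e (i : Fin n) :
      ∫ x, x i * fderiv ℝ ζ x (EuclideanSpace.single i 1) = -∫ x, ζ x := by
    have h := integral_mul_fderiv_of_hasCompactSupport hζ hζc (hp i) (EuclideanSpace.single i 1)
    have h1 (x : E n) : fderiv ℝ (fun x : E n => x i) x (EuclideanSpace.single i 1) = 1 := by
      have : (fun x : E n => x i) = EuclideanSpace.proj (𝕜 := ℝ) i := rfl
      rw [this, ContinuousLinearMap.fderiv]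
      simp
    simp only [h1, mul_one] at h
    rw [h, neg_neg]
    simp only [mul_comm]
  simp only [fun x => fderiv_eq_sum (fderiv ℝ ζ x) x]
  rw [integral_finsetSum]
  · simp [e]
  · intro i _
    refine Continuous.integrable_of_hasCompactSupport ?_ ?_
    · exact (hp i).continuous.mul (hd.clm_apply continuous_const)
    · exact (hζc.fderiv_apply (𝕜 := ℝ) _).mul_left

lemma fderiv_norm_sq_mul_logGrad {n : ℕ} {ζ : E n → ℝ} (hζ : ContDiff ℝ 1 ζ) {x : E n}
    (hx : x ≠ 0) : fderiv ℝ (fun x => ‖x‖ ^ 2 * ζ x) x (logGrad x) = 2 * ζ x + fderiv ℝ ζ x x := by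
  have h1 : HasFDerivAt (fun x : E n => ‖x‖ ^ 2) _ x := (hasStrictFDerivAt_norm_sq x).hasFDerivAt
  have h2 := HasFDerivAt.fun_mul h1 (hζ.differentiable one_ne_zero x).hasFDerivAt
  have hn : ‖x‖ ^ 2 ≠ 0 := by simpa using hx
  rw [h2.fderiv]
  simp [logGrad]
  field_simp
  ring

lemma tendsto_setIntegral_norm_of_sq {n : ℕ} {B : Set (E n)} (hB : IsCompact B)
    {D : ℝ → E n → E n} (hD : ∀ r, ContinuousOn (D r) B)
    (h : Tendsto (fun r => ∫ x in B, ‖D r x‖ ^ 2) atTop (nhds 0)) :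
    Tendsto (fun r => ∫ x in B, ‖D r x‖) atTop (nhds 0) := by
  have hle (r : ℝ) : ∫ x in B, ‖D r x‖ ≤
      Real.sqrt (volume.real B) * Real.sqrt (∫ x in B, ‖D r x‖ ^ 2) := by
    have hfin : IsFiniteMeasure (volume.restrict B) := ⟨by simpa using hB.measure_lt_top⟩
    have hm : MemLp (fun x => ‖D r x‖) (ENNReal.ofReal 2) (volume.restrict B) := by
      rw [ENNReal.ofReal_ofNat, memLp_two_iff_integrable_sq
        (((hD r).norm.aestronglyMeasurable hB.measurableSet))]
      exact ((hD r).norm.pow 2).integrableOn_compact hB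
    have := integral_mul_le_Lp_mul_Lq_of_nonneg Real.HolderConjugate.two_two
      (μ := volume.restrict B) (f := fun _ => (1 : ℝ)) (g := fun x => ‖D r x‖)
      (.of_forall fun _ => zero_le_one) (.of_forall fun _ => norm_nonneg _) (memLp_const 1) hm
    simpa [Real.sqrt_eq_rpow] using this
  have hT : Tendsto (fun r => Real.sqrt (volume.real B) * Real.sqrt (∫ x in B, ‖D r x‖ ^ 2))
      atTop (nhds 0) := by
    simpa using ((Real.continuous_sqrt.tendsto 0).comp h).const_mul (Real.sqrt (volume.real B))
  exact squeeze_zero (fun r => integral_nonneg fun x => norm_nonneg _) hle hT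

lemma tendsto_setIntegral_clm_apply {n : ℕ} {B : Set (E n)} (hB : IsCompact B)
    {D : ℝ → E n → E n} (hD : ∀ r, ContinuousOn (D r) B)
    (h : Tendsto (fun r => ∫ x in B, ‖D r x‖ ^ 2) atTop (nhds 0))
    {A : E n → E n →L[ℝ] ℝ} (hA : ContinuousOn A B) :
    Tendsto (fun r => ∫ x in B, A x (D r x)) atTop (nhds 0) := by
  obtain ⟨M, hM⟩ := hB.exists_bound_of_continuousOn hA
  have hT := (tendsto_setIntegral_norm_of_sq hB hD h).const_mul M
  rw [mul_zero] at hT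
  refine squeeze_zero_norm (fun r => ?_) hT
  rw [← integral_const_mul]
  refine (norm_integral_le_integral_norm _).trans
    (setIntegral_mono_on ?_ ?_ hB.measurableSet fun x hx => ?_)
  · exact ((hA.clm_apply (hD r)).norm).integrableOn_compact hB
  · exact (continuousOn_const.mul (hD r).norm).integrableOn_compact hB
  · exact (A x).le_of_opNorm_le (hM x hx) _

lemma tendsto_setIntegral_mul_norm_sq {n : ℕ} {B : Set (E n)} (hB : IsCompact B)
    {D : ℝ → E n → E n} (hD : ∀ r, ContinuousOn (D r) B)
    (h : Tendsto (fun r => ∫ x in B, ‖D r x‖ ^ 2) atTop (nhds 0))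
    {w : E n → ℝ} (hw : ContinuousOn w B) :
    Tendsto (fun r => ∫ x in B, w x * ‖D r x‖ ^ 2) atTop (nhds 0) := by
  obtain ⟨M, hM⟩ := hB.exists_bound_of_continuousOn hw
  have hT := h.const_mul M
  rw [mul_zero] at hT
  refine squeeze_zero_norm (fun r => ?_) hT
  rw [← integral_const_mul]
  refine (norm_integral_le_integral_norm _).trans
    (setIntegral_mono_on ?_ ?_ hB.measurableSet fun x hx => ?_)
  · exact ((hw.mul ((hD r).norm.pow 2)).norm).integrableOn_compact hB
  · exact (continuousOn_const.mul ((hD r).norm.pow 2)).integrableOn_compact hB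
  · rw [norm_mul, norm_pow, norm_norm]
    gcongr
    exact hM x hx

lemma tendsto_setIntegral_clm_apply_of_add {n : ℕ} {B : Set (E n)} (hB : IsCompact B)
    {V : ℝ → E n → E n} (hV : ∀ r, ContinuousOn (V r) B)
    {K : E n → E n} (hK : ContinuousOn K B) {a : ℝ}
    (h : Tendsto (fun r => ∫ x in B, ‖V r x + a • K x‖ ^ 2) atTop (nhds 0))
    {A : E n → E n →L[ℝ] ℝ} (hA : ContinuousOn A B) :
    Tendsto (fun r => ∫ x in B, A x (V r x)) atTop (nhds (-a * ∫ x in B, A x (K x))) := by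
  have hD (r : ℝ) : ContinuousOn (fun x => V r x + a • K x) B := (hV r).add (hK.const_smul a)
  have h1 := (tendsto_setIntegral_clm_apply hB hD h hA).add_const (-a * ∫ x in B, A x (K x))
  rw [zero_add] at h1
  refine h1.congr fun r => ?_
  have i2 : IntegrableOn (fun x => -a * A x (K x)) B :=
    (continuousOn_const.mul (hA.clm_apply hK)).integrableOn_compact hB
  rw [← integral_const_mul, ← integral_add ((hA.clm_apply (hD r)).integrableOn_compact hB) i2]
  congr with x
  simp

lemma tendsto_setIntegral_mul_norm_sq_of_add {n : ℕ} {B : Set (E n)} (hB : IsCompact B)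
    {V : ℝ → E n → E n} (hV : ∀ r, ContinuousOn (V r) B)
    {K : E n → E n} (hK : ContinuousOn K B) {a : ℝ}
    (h : Tendsto (fun r => ∫ x in B, ‖V r x + a • K x‖ ^ 2) atTop (nhds 0))
    {w : E n → ℝ} (hw : ContinuousOn w B) :
    Tendsto (fun r => ∫ x in B, w x * ‖V r x‖ ^ 2) atTop
      (nhds (a ^ 2 * ∫ x in B, w x * ‖K x‖ ^ 2)) := by
  have hD (r : ℝ) : ContinuousOn (fun x => V r x + a • K x) B := (hV r).add (hK.const_smul a)
  have hA : ContinuousOn (fun x => w x • innerSL ℝ (K x)) B :=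
    hw.smul ((innerSL ℝ).continuous.comp_continuousOn hK)
  have h1 := (tendsto_setIntegral_mul_norm_sq hB hD h hw).sub
    ((tendsto_setIntegral_clm_apply_of_add hB hV hK h hA).const_mul (2 * a))
  have h2 := h1.sub_const (a ^ 2 * ∫ x in B, w x * ‖K x‖ ^ 2)
  have hwk : IntegrableOn (fun x => w x * ‖K x‖ ^ 2) B :=
    (hw.mul (hK.norm.pow 2)).integrableOn_compact hB
  have e0 (x : E n) : (w x • innerSL ℝ (K x)) (K x) = w x * ‖K x‖ ^ 2 := by simp
  simp only [e0] at h2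
  convert h2 using 1
  · ext r
    rw [← integral_const_mul, ← integral_const_mul, ← integral_sub, ← integral_sub]
    · congr with x
      rw [norm_add_sq_real]
      simp [inner_smul_right, norm_smul, mul_pow, real_inner_comm]
      ring
    · exact (hw.mul ((hD r).norm.pow 2)).integrableOn_compact hB |>.sub
        ((continuousOn_const.mul (hA.clm_apply (hV r))).integrableOn_compact hB)
    · exact hwk.const_mul _
    · exact (hw.mul ((hD r).norm.pow 2)).integrableOn_compact hB
    · exact (continuousOn_const.mul (hA.clm_apply (hV r))).integrableOn_compact hB
  · congr 1
    ring

lemma setIntegral_fderiv_norm_sq_mul_logGrad {n : ℕ} {B : Set (E n)} (hB : IsCompact B)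
    (hB1 : ∀ x ∈ B, 1 ≤ ‖x‖) {ζ : E n → ℝ} (hζ : ContDiff ℝ 1 ζ) (hζB : ∀ x ∉ B, ζ x = 0) :
    ∫ x in B, fderiv ℝ (fun x => ‖x‖ ^ 2 * ζ x) x (logGrad x) = (2 - n) * ∫ x, ζ x := by
  have hζc : HasCompactSupport ζ := .intro hB hζB
  have hd0 (x : E n) (hx : x ∉ B) : fderiv ℝ ζ x x = 0 := by
    have : x ∉ tsupport (fderiv ℝ ζ) := fun h => hx (closure_minimal
      (Function.support_subset_iff'.2 hζB) hB.isClosed (tsupport_fderiv_subset ℝ h))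
    rw [image_eq_zero_of_notMem_tsupport this]; rfl
  have hdc : Continuous fun x => fderiv ℝ ζ x x :=
    (hζ.continuous_fderiv one_ne_zero).clm_apply continuous_id
  rw [setIntegral_congr_fun hB.measurableSet fun x hx => fderiv_norm_sq_mul_logGrad hζ
    (x := x) (by rintro rfl; have := hB1 _ hx; norm_num at this)]
  have i1 : IntegrableOn (fun x => 2 * ζ x) B :=
    (continuous_const.mul hζ.continuous).continuousOn.integrableOn_compact hB
  rw [integral_add i1
    (hdc.continuousOn.integrableOn_compact hB),
    setIntegral_eq_integral_of_forall_compl_eq_zero hd0, integral_const_mul,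
    setIntegral_eq_integral_of_forall_compl_eq_zero hζB, integral_fderiv_apply_self hζ hζc]
  ring

section rescaling

variable {n : ℕ} {B : Set (E n)} {u : E n → ℝ} {a : ℝ} {ζ : E n → ℝ}

lemma continuousOn_logGrad (hB1 : ∀ x ∈ B, 1 ≤ ‖x‖) : ContinuousOn (logGrad (n := n)) B :=
  fun x hx => (continuousAt_logGrad (by
    rintro rfl; have := hB1 _ hx; norm_num at this)).continuousWithinAt

lemma tendsto_integral_norm_sq_mul_neg_lap (hB : IsCompact B) (hB1 : ∀ x ∈ B, 1 ≤ ‖x‖)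
    (hu : ContDiff ℝ 2 u)
    (h : Tendsto (fun r : ℝ => ∫ x in B, ‖r • gradient u (r • x) + a • logGrad x‖ ^ 2)
      atTop (nhds 0)) (hζ : ContDiff ℝ 1 ζ) (hζB : ∀ x ∉ B, ζ x = 0) :
    Tendsto (fun r : ℝ => ∫ x, (‖x‖ ^ 2 * ζ x) * -lap (fun y => u (r • y)) x) atTop
      (nhds (a * (n - 2) * ∫ x, ζ x)) := by
  have hη : ContDiff ℝ 1 fun x => ‖x‖ ^ 2 * ζ x := (contDiff_norm_sq ℝ).mul hζ
  have hη0 (x : E n) (hx : x ∉ B) : ‖x‖ ^ 2 * ζ x = 0 := by simp [hζB x hx]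
  have hd0 (x : E n) (hx : x ∉ B) : fderiv ℝ (fun x => ‖x‖ ^ 2 * ζ x) x = 0 := by
    have : x ∉ tsupport (fderiv ℝ fun x => ‖x‖ ^ 2 * ζ x) := fun h => hx (closure_minimal
      (Function.support_subset_iff'.2 hη0) hB.isClosed (tsupport_fderiv_subset ℝ h))
    exact image_eq_zero_of_notMem_tsupport this
  have hg := continuous_gradient (hu.of_le (by norm_num))
  have hV (r : ℝ) : ContinuousOn (fun x => r • gradient u (r • x)) B := by fun_prop
  have h1 := tendsto_setIntegral_clm_apply_of_add hB hV (continuousOn_logGrad hB1) h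
    (hη.continuous_fderiv one_ne_zero).continuousOn
  rw [setIntegral_fderiv_norm_sq_mul_logGrad hB hB1 hζ hζB] at h1
  convert h1 using 1
  · ext r
    have hur : ContDiff ℝ 2 fun y => u (r • y) := hu.comp (contDiff_const_smul r)
    rw [integral_mul_neg_lap hη (.intro hB hη0) hur,
      setIntegral_eq_integral_of_forall_compl_eq_zero]
    · simp only [gradient_comp_smul]
    · intro x hx; rw [hd0 x hx]; rfl
  · congr 1; ring

lemma tendsto_integral_norm_sq_mul_norm_gradient_sq (hB : IsCompact B) (hB1 : ∀ x ∈ B, 1 ≤ ‖x‖)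
    (hu : ContDiff ℝ 1 u)
    (h : Tendsto (fun r : ℝ => ∫ x in B, ‖r • gradient u (r • x) + a • logGrad x‖ ^ 2)
      atTop (nhds 0)) (hζ : Continuous ζ) (hζB : ∀ x ∉ B, ζ x = 0) :
    Tendsto (fun r : ℝ => ∫ x, (‖x‖ ^ 2 * ζ x) * ‖gradient (fun y => u (r • y)) x‖ ^ 2) atTop
      (nhds (a ^ 2 * ∫ x, ζ x)) := by
  have hg := continuous_gradient hu
  have hV (r : ℝ) : ContinuousOn (fun x => r • gradient u (r • x)) B := by fun_prop
  have h1 := tendsto_setIntegral_mul_norm_sq_of_add hB hV (continuousOn_logGrad hB1) h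
    (w := fun x => ‖x‖ ^ 2 * ζ x) (by fun_prop)
  have e : ∫ x in B, ‖x‖ ^ 2 * ζ x * ‖logGrad x‖ ^ 2 = ∫ x, ζ x := by
    rw [← setIntegral_eq_integral_of_forall_compl_eq_zero hζB]
    refine setIntegral_congr_fun hB.measurableSet fun x hx => ?_
    have : ‖x‖ ≠ 0 := by have := hB1 x hx; positivity
    simp only [norm_logGrad_sq]
    field_simp
  rw [e] at h1
  refine h1.congr fun r => ?_
  rw [setIntegral_eq_integral_of_forall_compl_eq_zero fun x hx => by simp [hζB x hx]]
  simp only [gradient_comp_smul]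

lemma tendsto_integral_mul_inner_gradient (hB : IsCompact B) (hB1 : ∀ x ∈ B, 1 ≤ ‖x‖)
    (hu : ContDiff ℝ 1 u)
    (h : Tendsto (fun r : ℝ => ∫ x in B, ‖r • gradient u (r • x) + a • logGrad x‖ ^ 2)
      atTop (nhds 0)) (hζ : Continuous ζ) (hζB : ∀ x ∉ B, ζ x = 0) :
    Tendsto (fun r : ℝ => ∫ x, ζ x * (r * fderiv ℝ u (r • x) x)) atTop
      (nhds (-a * ∫ x, ζ x)) := by
  have hg := continuous_gradient hu
  have hV (r : ℝ) : ContinuousOn (fun x => r • gradient u (r • x)) B := by fun_prop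
  have h1 := tendsto_setIntegral_clm_apply_of_add hB hV (continuousOn_logGrad hB1) h
    (A := fun x => ζ x • innerSL ℝ x) (by fun_prop)
  have e : ∫ x in B, (ζ x • innerSL ℝ x) (logGrad x) = ∫ x, ζ x := by
    rw [← setIntegral_eq_integral_of_forall_compl_eq_zero hζB]
    refine setIntegral_congr_fun hB.measurableSet fun x hx => ?_
    have : ‖x‖ ≠ 0 := by have := hB1 x hx; positivity
    simp [logGrad]
    field_simp
  rw [e] at h1
  refine h1.congr fun r => ?_
  rw [setIntegral_eq_integral_of_forall_compl_eq_zero fun x hx => by simp [hζB x hx]]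
  simp [mul_left_comm]

lemma tendsto_integral_mul_exp (hB1 : ∀ x ∈ B, 1 ≤ ‖x‖) (hu : Continuous u)
    (hvol : Integrable fun x : E n => Real.exp (n * u x))
    (hζ : Continuous ζ) (hζ0 : ∀ x, 0 ≤ ζ x) (hζ1 : ∀ x, ζ x ≤ 1) (hζB : ∀ x ∉ B, ζ x = 0) :
    Tendsto (fun r : ℝ => ∫ x, ζ x * Real.exp (n * (u (r • x) + Real.log r))) atTop
      (nhds 0) := by
  have hT : Tendsto (fun r : ℝ => ∫ x, ζ (r⁻¹ • x) * Real.exp (n * u x)) atTop (nhds 0) := by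
    have h0 : (∫ _ : E n, (0 : ℝ)) = 0 := integral_zero _ _
    rw [← h0]
    refine tendsto_integral_filter_of_dominated_convergence _
      (.of_forall fun r => Continuous.aestronglyMeasurable (by fun_prop))
      (.of_forall fun r => .of_forall fun x => ?_) hvol (.of_forall fun x => ?_)
    · rw [norm_mul, Real.norm_of_nonneg (hζ0 _), Real.norm_of_nonneg (Real.exp_pos _).le]
      exact mul_le_of_le_one_left (Real.exp_pos _).le (hζ1 _)
    · have h1 : Tendsto (fun r : ℝ => r⁻¹ • x) atTop (nhds 0) := by
        simpa using (tendsto_inv_atTop_zero (𝕜 := ℝ)).smul_const x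
      have h2 : ζ 0 = 0 := hζB 0 fun h => by have := hB1 0 h; norm_num at this
      have h3 := ((hζ.tendsto 0).comp h1).mul_const (Real.exp (n * u x))
      rw [h2, zero_mul] at h3
      exact h3
  refine hT.congr' ?_
  filter_upwards [eventually_gt_atTop 0] with r hr
  have e (x : E n) : ζ x * Real.exp (n * (u (r • x) + Real.log r)) =
      r ^ n * (fun y => ζ (r⁻¹ • y) * Real.exp (n * u y)) (r • x) := by
    simp only
    rw [inv_smul_smul₀ hr.ne', mul_add, Real.exp_add, Real.exp_nat_mul (Real.log r),
      Real.exp_log hr]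
    ring
  rw [integral_congr_ae (.of_forall e), integral_const_mul,
    Measure.integral_comp_smul volume fun y => ζ (r⁻¹ • y) * Real.exp (n * u y), finrank_euclideanSpace_fin, smul_eq_mul,
    abs_of_pos (by positivity), mul_inv_cancel_left₀ (by positivity)]

lemma hasDerivAt_integral_mul_comp_smul (hB : IsCompact B) (hu : ContDiff ℝ 1 u)
    (hζ : Continuous ζ) (hζB : ∀ x ∉ B, ζ x = 0) (r : ℝ) :
    HasDerivAt (fun r : ℝ => ∫ x, ζ x * u (r • x)) (∫ x, ζ x * fderiv ℝ u (r • x) x) r := by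
  have hdu := hu.continuous_fderiv one_ne_zero
  have hc : Continuous fun p : ℝ × E n => fderiv ℝ u (p.1 • p.2) p.2 := by fun_prop
  obtain ⟨M, hM⟩ := ((isCompact_closedBall r 1).prod hB).exists_bound_of_continuousOn
    hc.continuousOn
  have hζc : HasCompactSupport ζ := .intro hB hζB
  refine (hasDerivAt_integral_of_dominated_loc_of_deriv_le (bound := fun x => |ζ x| * M)
    (F' := fun r x => ζ x * fderiv ℝ u (r • x) x)
    (Metric.closedBall_mem_nhds r one_pos)
    (.of_forall fun s => Continuous.aestronglyMeasurable (by fun_prop)) ?_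
    (Continuous.aestronglyMeasurable (by fun_prop)) ?_ ?_ ?_).2
  · exact Continuous.integrable_of_hasCompactSupport (by fun_prop) hζc.mul_right
  · refine .of_forall fun x s hs => ?_
    rw [norm_mul, Real.norm_eq_abs]
    by_cases hx : x ∈ B
    · gcongr
      exact hM (s, x) ⟨hs, hx⟩
    · simp [hζB x hx]
  · exact (hζ.abs.integrable_of_hasCompactSupport hζc.norm).mul_const M
  · refine .of_forall fun x s _ => ?_
    have h1 : HasDerivAt (fun s : ℝ => s • x) x s := by
      simpa using (hasDerivAt_id s).smul_const x
    exact ((hu.differentiable one_ne_zero (s • x)).hasFDerivAt.comp_hasDerivAt s h1).const_mul _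

lemma integral_add_le_integral_mul_exp (hB : IsCompact B) (hu : Continuous u)
    (hζ : Continuous ζ) (hζ0 : ∀ x, 0 ≤ ζ x) (hζB : ∀ x ∉ B, ζ x = 0) (r : ℝ) :
    (∫ x, ζ x) + n * ((∫ x, ζ x * u (r • x)) + (∫ x, ζ x) * Real.log r) ≤
      ∫ x, ζ x * Real.exp (n * (u (r • x) + Real.log r)) := by
  have hζc : HasCompactSupport ζ := .intro hB hζB
  have i1 : Integrable ζ := hζ.integrable_of_hasCompactSupport hζc
  have i2 : Integrable fun x => ζ x * u (r • x) :=
    Continuous.integrable_of_hasCompactSupport (by fun_prop) hζc.mul_right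
  have i3 : Integrable fun x => ζ x * Real.exp (n * (u (r • x) + Real.log r)) :=
    Continuous.integrable_of_hasCompactSupport (by fun_prop) hζc.mul_right
  have i4 : Integrable fun x => n * (ζ x * u (r • x) + ζ x * Real.log r) :=
    (i2.add (i1.mul_const (Real.log r))).const_mul _
  rw [← integral_mul_const, ← integral_add i2 (i1.mul_const _), ← integral_const_mul,
    ← integral_add i1 i4]
  refine integral_mono (i1.add i4) i3 fun x => ?_
  have h1 := mul_le_mul_of_nonneg_left
    (Real.add_one_le_exp (n * (u (r • x) + Real.log r))) (hζ0 x)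
  refine le_trans (le_of_eq ?_) h1
  ring

lemma one_le_of_tendsto (hn : 0 < n) (hB : IsCompact B) (hB1 : ∀ x ∈ B, 1 ≤ ‖x‖)
    (hu : ContDiff ℝ 1 u) (hvol : Integrable fun x : E n => Real.exp (n * u x))
    (h : Tendsto (fun r : ℝ => ∫ x in B, ‖r • gradient u (r • x) + a • logGrad x‖ ^ 2)
      atTop (nhds 0)) (hζ : Continuous ζ) (hζ0 : ∀ x, 0 ≤ ζ x) (hζ1 : ∀ x, ζ x ≤ 1)
    (hζB : ∀ x ∉ B, ζ x = 0) (hI : 0 < ∫ x, ζ x) : 1 ≤ a := by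
  by_contra! ha
  set I := ∫ x, ζ x
  set m : ℝ → ℝ := fun r => ∫ x, ζ x * u (r • x)
  set ε := (1 - a) / 2 * I with hε
  have hεpos : 0 < ε := mul_pos (by linarith) hI
  have hm (r : ℝ) : HasDerivAt m _ r := hasDerivAt_integral_mul_comp_smul hB hu hζ hζB r
  have hlim := tendsto_integral_mul_inner_gradient hB hB1 hu h hζ hζB
  obtain ⟨r₀, hr₀⟩ := eventually_atTop.1
    ((hlim.eventually_const_lt (show -a * I - ε < -a * I by linarith)).and
      (eventually_gt_atTop 0))
  have hr0 : 0 < r₀ := (hr₀ r₀ le_rfl).2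
  have hG (r : ℝ) (hr : 0 < r) : HasDerivAt (fun r => m r + (I - ε) * Real.log r)
      ((∫ x, ζ x * fderiv ℝ u (r • x) x) + (I - ε) * r⁻¹) r :=
    (hm r).add ((Real.hasDerivAt_log hr.ne').const_mul _)
  have hmono : MonotoneOn (fun r => m r + (I - ε) * Real.log r) (Set.Ici r₀) := by
    refine monotoneOn_of_hasDerivWithinAt_nonneg (convex_Ici r₀)
      (fun r hr => (hG r (hr0.trans_le hr)).continuousAt.continuousWithinAt)
      (fun r hr => (hG r (hr0.trans_le (interior_subset hr))).hasDerivWithinAt) fun r hr => ?_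
    have hr' : r₀ ≤ r := interior_subset hr
    have hrp := hr0.trans_le hr'
    have h1 := (hr₀ r hr').1
    simp only [mul_left_comm _ r, integral_const_mul] at h1
    have h2 : 0 ≤ r * ((∫ x, ζ x * fderiv ℝ u (r • x) x) + (I - ε) * r⁻¹) := by
      rw [mul_add, mul_left_comm, mul_inv_cancel₀ hrp.ne']
      change -a * I - ε < r * _ at h1
      nlinarith
    exact nonneg_of_mul_nonneg_right h2 hrp
  have hW := tendsto_integral_mul_exp hB1 hu.continuous hvol hζ hζ0 hζ1 hζB
  have hlog : Tendsto (fun r => I + n * (m r₀ + (I - ε) * Real.log r₀ + ε * Real.log r))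
      atTop atTop :=
    tendsto_atTop_add_const_left _ _ ((tendsto_atTop_add_const_left _ _
      (Real.tendsto_log_atTop.const_mul_atTop hεpos)).const_mul_atTop (by exact_mod_cast hn))
  refine not_tendsto_nhds_of_tendsto_atTop (tendsto_atTop_mono' _ ?_ hlog) 0 hW
  filter_upwards [eventually_ge_atTop r₀] with r hr
  refine le_trans ?_ (integral_add_le_integral_mul_exp hB hu.continuous hζ hζ0 hζB r)
  have := hmono Set.self_mem_Ici hr hr
  simp only at this
  have key : m r₀ + (I - ε) * Real.log r₀ + ε * Real.log r ≤ m r + I * Real.log r := by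
    linarith
  exact add_le_add_right (mul_le_mul_of_nonneg_left key n.cast_nonneg) I

lemma tendsto_integral_norm_sq_mul_curvature (hB : IsCompact B) (hB1 : ∀ x ∈ B, 1 ≤ ‖x‖)
    (hu : ContDiff ℝ 2 u)
    (h : Tendsto (fun r : ℝ => ∫ x in B, ‖r • gradient u (r • x) + a • logGrad x‖ ^ 2)
      atTop (nhds 0)) (hζ : ContDiff ℝ 1 ζ) (hζB : ∀ x ∉ B, ζ x = 0) :
    Tendsto (fun r : ℝ => ∫ x, (‖x‖ ^ 2 * ζ x) * (r ^ 2 * (-lap u (r • x) -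
      (n - 2) / 2 * ‖gradient u (r • x)‖ ^ 2))) atTop
      (nhds ((n - 2) * (a * (1 - a / 2)) * ∫ x, ζ x)) := by
  have hu1 : ContDiff ℝ 1 u := hu.of_le (by norm_num)
  have hg := continuous_gradient hu1
  have hζ' := hζ.continuous
  have h1 := (tendsto_integral_norm_sq_mul_neg_lap hB hB1 hu h hζ hζB).sub
    ((tendsto_integral_norm_sq_mul_norm_gradient_sq hB hB1 hu1 h hζ.continuous hζB).const_mul
      (((n : ℝ) - 2) / 2))
  have hlap : Continuous (lap u) := by
    unfold lap
    refine continuous_finsetSum _ fun i _ => ?_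
    have : ContDiff ℝ 1 fun y => fderiv ℝ u y (EuclideanSpace.single i 1) :=
      (hu.fderiv_right (m := 1) (by norm_num)).clm_apply contDiff_const
    exact (this.continuous_fderiv one_ne_zero).clm_apply continuous_const
  have hc : HasCompactSupport fun x => ‖x‖ ^ 2 * ζ x :=
    .intro hB fun x hx => by simp [hζB x hx]
  convert h1 using 1
  · ext r
    simp only [lap_comp_smul hu, gradient_comp_smul, norm_smul, mul_pow, Real.norm_eq_abs, sq_abs]
    rw [← integral_const_mul, ← integral_sub]
    · congr with x
      ring
    · exact Continuous.integrable_of_hasCompactSupport (by fun_prop) hc.mul_right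
    · exact (Continuous.integrable_of_hasCompactSupport (by fun_prop) hc.mul_right).const_mul _
  · congr 1
    ring

end rescaling

lemma volume_univ_eq_top {n : ℕ} (hn : 0 < n) : volume (Set.univ : Set (E n)) = ⊤ := by
  have : Nonempty (Fin n) := ⟨⟨0, hn⟩⟩
  have := NormedSpace.noncompactSpace ℝ (E n)
  exact measure_univ_of_isAddLeftInvariant _

lemma not_integrable_const {n : ℕ} (hn : 0 < n) {b : ℝ} (hb : b ≠ 0) :
    ¬Integrable fun _ : E n => b := by
  rw [integrable_const_iff, not_or]
  refine ⟨hb, fun h => h.measure_univ_lt_top.ne (volume_univ_eq_top hn)⟩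

lemma eq_zero_of_integrable_log_mul_add {n : ℕ} (hn : 0 < n) {f : E n → ℝ} (hf : Integrable f)
    {x : E n} {b : ℝ} (h : Integrable fun y => Real.log (‖y‖ / ‖x - y‖) * f y + b) : b = 0 := by
  by_contra hb
  set S : Set (E n) := (Metric.closedBall 0 (2 * ‖x‖ + 1))ᶜ
  have hS : MeasurableSet S := Metric.isClosed_closedBall.measurableSet.compl
  have hlog : IntegrableOn (fun y => Real.log (‖y‖ / ‖x - y‖) * f y) S := by
    refine ((hf.norm.const_mul 4).integrableOn (s := S)).mono'
      ((Measurable.aestronglyMeasurable (by fun_prop)).mul hf.1.restrict) ?_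
    filter_upwards [ae_restrict_mem hS] with y hy
    have hy' : 2 * ‖x‖ + 1 < ‖y‖ := by simpa [S] using hy
    have hx := norm_nonneg x
    have h1 := norm_sub_norm_le y x
    have h2 := norm_sub_le x y
    rw [norm_sub_rev] at h1
    have hd : 0 < ‖x - y‖ := by linarith
    rw [norm_mul, Real.norm_eq_abs]
    gcongr
    refine (abs_log_le_add_inv (by positivity)).trans ?_
    rw [inv_div]
    have h3 : ‖y‖ / ‖x - y‖ ≤ 2 := by
      rw [div_le_iff₀ hd]; linarith
    have h4 : ‖x - y‖ / ‖y‖ ≤ 2 := by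
      rw [div_le_iff₀ (by linarith)]; linarith
    linarith
  have hc : IntegrableOn (fun _ : E n => b) S := by
    refine (h.integrableOn.sub hlog).congr_fun (fun y _ => ?_) hS
    exact add_sub_cancel_left _ b
  rw [integrableOn_const_iff] at hc
  have hfin : volume S < ⊤ := hc.resolve_left (by simpa using hb)
  have : volume (Set.univ : Set (E n)) < ⊤ := by
    rw [← Set.union_compl_self (Metric.closedBall (0 : E n) (2 * ‖x‖ + 1))]
    exact (measure_union_le _ _).trans_lt (ENNReal.add_lt_top.2 ⟨measure_closedBall_lt_top, hfin⟩)
  exact this.ne (volume_univ_eq_top hn)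

lemma curvature_eq {n : ℕ} (hn : 2 ≤ n) (u : E n → ℝ) {r : ℝ} (hr : 0 < r) (x : E n) :
    r ^ 2 * (-lap u x - (n - 2) / 2 * ‖gradient u x‖ ^ 2) =
      (2 * (n - 1) : ℝ)⁻¹ * (Rg n u x * Real.exp (u x + Real.log r) ^ 2) := by
  have hk : (2 * (n - 1) : ℝ)⁻¹ * (2 * (n - 1)) = 1 := by
    have : (2 : ℝ) ≤ n := by exact_mod_cast hn
    exact inv_mul_cancel₀ (by linarith)
  have e : Real.exp (-2 * u x) * Real.exp (u x) ^ 2 = 1 := by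
    rw [← Real.exp_nat_mul, ← Real.exp_add]
    simp
  rw [Real.exp_add, Real.exp_log hr, Rg]
  generalize -lap u x - (n - 2) / 2 * ‖gradient u x‖ ^ 2 = S
  generalize (2 * (n - 1) : ℝ)⁻¹ = k at hk ⊢
  linear_combination (-(r ^ 2 * S * Real.exp (-2 * u x) * Real.exp (u x) ^ 2)) * hk -
    r ^ 2 * S * e

lemma sq_le_add_pow {n : ℕ} (hn : 2 ≤ n) {t δ : ℝ} (ht : 0 ≤ t) (hδ : 0 < δ) :
    t ^ 2 ≤ δ ^ 2 + (δ ^ (n - 2))⁻¹ * t ^ n := by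
  rcases le_total t δ with h | h
  · have : t ^ 2 ≤ δ ^ 2 := by gcongr
    have : 0 ≤ (δ ^ (n - 2))⁻¹ * t ^ n := by positivity
    linarith
  · have h1 : δ ^ (n - 2) * t ^ 2 ≤ t ^ n := by
      calc δ ^ (n - 2) * t ^ 2 ≤ t ^ (n - 2) * t ^ 2 := by gcongr
        _ = t ^ n := by rw [← pow_add, Nat.sub_add_cancel hn]
    have h2 : t ^ 2 ≤ (δ ^ (n - 2))⁻¹ * t ^ n := by
      rw [inv_mul_eq_div, le_div_iff₀ (by positivity)]
      linarith
    nlinarith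

lemma eq_two_of_tendsto {n : ℕ} (hn : 3 ≤ n) {B : Set (E n)} {u ζ : E n → ℝ} {a C : ℝ}
    (hB : IsCompact B) (hB1 : ∀ x ∈ B, 1 ≤ ‖x‖) {b : ℝ} (hb : ∀ x ∈ B, ‖x‖ ≤ b)
    (hu : ContDiff ℝ 2 u) (hvol : Integrable fun x : E n => Real.exp (n * u x))
    (hR : ∃ R : ℝ, ∀ x : E n, R ≤ ‖x‖ → 0 ≤ Rg n u x ∧ Rg n u x ≤ C)
    (h : Tendsto (fun r : ℝ => ∫ x in B, ‖r • gradient u (r • x) + a • logGrad x‖ ^ 2)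
      atTop (nhds 0)) (hζ : ContDiff ℝ 1 ζ) (hζ0 : ∀ x, 0 ≤ ζ x) (hζ1 : ∀ x, ζ x ≤ 1)
    (hζB : ∀ x ∉ B, ζ x = 0) (hI : 0 < ∫ x, ζ x) : a = 2 := by
  have hn2 : 2 ≤ n := by lia
  have hnR : (3 : ℝ) ≤ n := by exact_mod_cast hn
  have hu1 : ContDiff ℝ 1 u := hu.of_le (by norm_num)
  have hu0 := hu.continuous
  have hζ' := hζ.continuous
  have hζc : HasCompactSupport ζ := .intro hB hζB
  obtain ⟨R, hR⟩ := hR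
  have hP := tendsto_integral_norm_sq_mul_curvature hB hB1 hu h hζ hζB
  have hW := tendsto_integral_mul_exp hB1 hu.continuous hvol hζ' hζ0 hζ1 hζB
  have hfar {r : ℝ} (hr : max R 1 ≤ r) {x : E n} (hx : x ∈ B) : R ≤ ‖r • x‖ := by
    have h1 : 1 ≤ r := (le_max_right _ _).trans hr
    rw [norm_smul, Real.norm_of_nonneg (by linarith)]
    nlinarith [hB1 x hx, (le_max_left R 1).trans hr]
  have hk : (0 : ℝ) ≤ (2 * (n - 1) : ℝ)⁻¹ := by
    have : (0 : ℝ) ≤ n - 1 := by linarith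
    positivity
  have lower : 0 ≤ (n - 2) * (a * (1 - a / 2)) * ∫ x, ζ x := by
    refine ge_of_tendsto hP ?_
    filter_upwards [eventually_ge_atTop (max R 1)] with r hr
    have h1 : 1 ≤ r := (le_max_right _ _).trans hr
    refine integral_nonneg fun x => ?_
    by_cases hx : x ∈ B
    · have := (hR _ (hfar hr hx)).1
      have := hζ0 x
      simp only [curvature_eq hn2 u (show 0 < r by linarith), Pi.zero_apply]
      positivity
    · simp [hζB x hx]
  have hC : 0 ≤ C := by
    have hBne : B.Nonempty := by
      by_contra! hBe
      refine hI.ne' ?_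
      simp [show ζ = 0 from funext fun x => hζB x (by simp [hBe])]
    obtain ⟨x, hx⟩ := hBne
    exact (hR _ (hfar le_rfl hx)).1.trans (hR _ (hfar le_rfl hx)).2
  set k := (2 * (n - 1) : ℝ)⁻¹ * C * b ^ 2
  have hk0 : 0 ≤ k := by positivity
  have bound (δ : ℝ) (hδ : 0 < δ) :
      (n - 2) * (a * (1 - a / 2)) * ∫ x, ζ x ≤ k * (δ ^ 2 * ∫ x, ζ x) := by
    have hT := ((hW.const_mul (δ ^ (n - 2))⁻¹).const_add (δ ^ 2 * ∫ x, ζ x)).const_mul k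
    rw [mul_zero, add_zero] at hT
    refine le_of_tendsto_of_tendsto hP hT ?_
    filter_upwards [eventually_ge_atTop (max R 1)] with r hr
    have h1 : 1 ≤ r := (le_max_right _ _).trans hr
    have i1 : Integrable fun x => δ ^ 2 * ζ x :=
      (hζ'.integrable_of_hasCompactSupport hζc).const_mul _
    have i2 : Integrable fun x =>
        (δ ^ (n - 2))⁻¹ * (ζ x * Real.exp (n * (u (r • x) + Real.log r))) :=
      (Continuous.integrable_of_hasCompactSupport (by fun_prop) hζc.mul_right).const_mul _
    rw [← integral_const_mul, ← integral_const_mul, ← integral_add i1 i2, ← integral_const_mul]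
    refine integral_mono_of_nonneg (.of_forall fun x => ?_) ((i1.add i2).const_mul k)
      (.of_forall fun x => ?_)
    · by_cases hx : x ∈ B
      · have := (hR _ (hfar hr hx)).1
        have := hζ0 x
        simp only [curvature_eq hn2 u (show 0 < r by linarith), Pi.zero_apply]
        positivity
      · simp [hζB x hx]
    · by_cases hx : x ∈ B
      · obtain ⟨hl, hup⟩ := hR _ (hfar hr hx)
        have hz := hζ0 x
        have hxb := hb x hx
        simp only [curvature_eq hn2 u (show 0 < r by linarith)]
        rw [Real.exp_nat_mul]
        set t := Real.exp (u (r • x) + Real.log r)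
        have ht : 0 ≤ t := (Real.exp_pos _).le
        calc ‖x‖ ^ 2 * ζ x * ((2 * (n - 1) : ℝ)⁻¹ * (Rg n u (r • x) * t ^ 2))
            ≤ b ^ 2 * ζ x * ((2 * (n - 1) : ℝ)⁻¹ * (C * t ^ 2)) := by gcongr
          _ = k * (ζ x * t ^ 2) := by ring
          _ ≤ k * (ζ x * (δ ^ 2 + (δ ^ (n - 2))⁻¹ * t ^ n)) := by
              gcongr
              exact sq_le_add_pow hn2 ht hδ
          _ = _ := by ring
      · simp [hζB x hx]
  have upper : (n - 2) * (a * (1 - a / 2)) * ∫ x, ζ x ≤ 0 := by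
    have hT : Tendsto (fun δ : ℝ => k * (δ ^ 2 * ∫ x, ζ x)) (nhdsWithin 0 (Set.Ioi 0))
        (nhds 0) := by
      have : Continuous fun δ : ℝ => k * (δ ^ 2 * ∫ x, ζ x) := by fun_prop
      exact (this.tendsto' 0 0 (by simp)).mono_left nhdsWithin_le_nhds
    exact ge_of_tendsto hT (by filter_upwards [self_mem_nhdsWithin] with δ hδ using bound δ hδ)
  have ha := one_le_of_tendsto (by lia) hB hB1 hu1 hvol h hζ' hζ0 hζ1 hζB hI
  have h0 := le_antisymm upper lower
  have hn' : (n : ℝ) - 2 ≠ 0 := by linarith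
  simp only [mul_eq_zero, hn', hI.ne', false_or, or_false] at h0
  rcases h0 with h0 | h0 <;> linarith

lemma exists_bump_of_one_le_norm {n : ℕ} (hn : 0 < n) :
    ∃ (B : Set (E n)) (ζ : E n → ℝ), IsCompact B ∧ (∀ x ∈ B, 1 ≤ ‖x‖ ∧ ‖x‖ ≤ 3) ∧
      ContDiff ℝ 1 ζ ∧ (∀ x, 0 ≤ ζ x) ∧ (∀ x, ζ x ≤ 1) ∧ (∀ x ∉ B, ζ x = 0) ∧
      0 < ∫ x, ζ x := by
  set p : E n := EuclideanSpace.single ⟨0, hn⟩ 2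
  have hp : ‖p‖ = 2 := by simp [p]
  let ζ : ContDiffBump p := ⟨1 / 2, 1, by norm_num, by norm_num⟩
  refine ⟨Metric.closedBall p 1, ζ, isCompact_closedBall p 1, fun x hx => ?_, ζ.contDiff,
    fun x => ζ.nonneg, fun x => ζ.le_one, fun x hx => ζ.zero_of_le_dist ?_, ζ.integral_pos⟩
  · have h1 : ‖x - p‖ ≤ 1 := by simpa [dist_eq_norm] using hx
    have h2 := norm_sub_norm_le p x
    have h3 := norm_sub_norm_le x p
    rw [norm_sub_rev] at h2
    constructor <;> linarith
  · have : 1 < dist x p := by simpa using hx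
    exact this.le

/-- A metric `e^{2u}|dx|²` of finite volume whose scalar curvature is nonnegative and bounded near
infinity, with `u` a logarithmic potential of total mass `c * ∫ f` up to a constant, has total mass
exactly `2`. -/
theorem mul_integral_eq_two {n : ℕ} (hn : 3 ≤ n) {u f : E n → ℝ} (hu : ContDiff ℝ 2 u)
    (hf : Integrable f) {c C₀ C : ℝ}
    (hrep : ∀ x, u x = c * (∫ y, Real.log (‖y‖ / ‖x - y‖) * f y) + C₀)
    (hR : ∃ R : ℝ, ∀ x : E n, R ≤ ‖x‖ → 0 ≤ Rg n u x ∧ Rg n u x ≤ C)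
    (hvol : Integrable fun x : E n => Real.exp (n * u x)) : c * ∫ y, f y = 2 := by
  have hu1 : ContDiff ℝ 1 u := hu.of_le (by norm_num)
  have hne : ∃ x, u x ≠ C₀ := by
    by_contra! hconst
    simp only [hconst] at hvol
    exact not_integrable_const (by lia) (Real.exp_ne_zero _) hvol
  obtain ⟨C', hC'⟩ := exists_ae_eq_sub_integral_log hn hf hrep hne
  have hgrad := ae_gradient_eq_integral_logGrad hn hu1 hf hC'
  obtain ⟨B, ζ, hB, hBn, hζ, hζ0, hζ1, hζB, hI⟩ := exists_bump_of_one_le_norm (n := n) (by lia)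
  exact eq_two_of_tendsto hn hB (fun x hx => (hBn x hx).1) (fun x hx => (hBn x hx).2) hu hvol hR
    (tendsto_integral_norm_smul_gradient_add_sq hn hu1 hf hgrad hB.measurableSet
      hB.measure_lt_top fun x hx => (hBn x hx).1) hζ hζ0 hζ1 hζB hI

/-- `0 ≤ R_g ≤ C` near infinity and finite volume force
`∫ Q e^{nu} = (n−1)!|𝕊ⁿ|`. -/
theorem stmt_12 (n : ℕ) (hn : 4 ≤ n) (hne : Even n)
    (u Q : E n → ℝ) (hu : ContDiff ℝ (⊤ : ℕ∞) u)
    (hint : Integrable (fun y => Q y * Real.exp (n * u y)))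
    (hnorm : IsNormal n u Q)
    (C : ℝ) (hC : 0 < C)
    (hR : ∃ R : ℝ, ∀ x : E n, R ≤ ‖x‖ → 0 ≤ Rg n u x ∧ Rg n u x ≤ C)
    (hvol : Integrable (fun x : E n => Real.exp (n * u x))) :
    ∫ x, Q x * Real.exp (n * u x) = Nat.factorial (n - 1) * sphereVol n := by
  obtain ⟨C₀, h⟩ := hnorm
  set c : ℝ := 2 / (Nat.factorial (n - 1) * sphereVol n) with hc
  have hC₀ : C₀ = 0 := by
    by_contra hC₀
    have h0 (x : E n) : u x = 0 := by
      rw [h x, integral_undef fun hi =>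
        hC₀ (eq_zero_of_integrable_log_mul_add (by lia) hint hi), mul_zero]
    simp only [h0] at hvol
    exact not_integrable_const (by lia) (Real.exp_ne_zero _) hvol
  have hrep (x : E n) : u x =
      c * (∫ y, Real.log (‖y‖ / ‖x - y‖) * (Q y * Real.exp (n * u y))) + 0 := by
    simpa only [hC₀, add_zero] using h x
  have key := mul_integral_eq_two (by lia) (contDiff_infty.1 hu 2) hint hrep hR hvol
  have hd : (Nat.factorial (n - 1) * sphereVol n : ℝ) ≠ 0 := by
    intro hd
    rw [hc, hd, div_zero, zero_mul] at key
    norm_num at key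
  rw [hc, div_mul_eq_mul_div, div_eq_iff hd] at key
  linarith
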